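/- Let d ≥ 3 be an integer. For each positive integer n, let u_n be a mild solution of ∂_t u = (1/2)Δu - u² with initial data n·1_{B(1)}, and set u(t,x) := sup_{n ≥ 1} u_n(t,x). Then the limit κ_d := lim_{t→∞} ∫_{ℝ^d} u(t,x) dx exists and satisfies 0 < κ_d < ∞. (This is the analytic core of the theorem that for a critical binary super-Brownian motion started from a Poisson random measure with Lebesgue intensity on ℝ^d, d ≥ 3, the radius R_t of the largest empty ball centered at the origin satisfies lim_{t→∞} P(R_t ≥ r) = e^{-κ_d r^{d-2}}.) -/

import Mathlib

/-!
The solutions are studied through the mild equation rewritten in `[0,∞]` (`HeatMild.Mild`), where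
sums and integrals need no integrability side conditions; subtraction is avoided by moving negative
terms across the equality and cancelling finite quantities.

**Reduction to bounds on the mass.** Integrating the mild equation in space gives the conservation
law `∫ U_t + ∫₀ᵗ ∫ U² = ∫ φ` (`Mild.mass`), so the mass `∫ U_t` is antitone in `t`. The solutions
`u_n` increase with `n` (`Mild.comparison`), so by monotone convergence `∫ sup_n u_n(t)` is the
supremum of the masses of the `u_n`, hence also antitone in `t`. The limit therefore exists, and it
remains to bound it from above and from below.

**Comparison.** Relative to the damped semigroup `e^{-ls} P_s`, with `l = 2N` for solutions bounded
by `N`, the source is `l U - U²`, which is monotone in `U` on `[0, N]` (`Mild.damped`). The largest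
violation `D` of the inequality between two solutions with ordered data on `(0, t]` then satisfies
`D ≤ (1 - e^{-lt}) D`, so `D = 0`.

**Upper bound, uniform in `n`.** Test the equation with a function `ψ` that vanishes on the unit
ball, equals `1` off the ball of radius `2`, and satisfies `(Δψ / 2)² ≤ C ψ` (`exists_cutoff`). The
initial data drop out, and `U Δψ / 2` is absorbed by Young's inequality into `U² ψ` and a constant;
this bounds the mass outside the ball of radius `2` (`exists_outside_bound`). Inside that ball, mass
forces dissipation by Cauchy–Schwarz: going back through the times `2^{-k}`, a mass at time `1`
above a dimensional constant would make the mass unbounded near time `0`, although it is at most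
`∫ φ` (`exists_mass_bound`).

**Lower bound.** For `n = 1`, domination by the heat flow gives `U_t ≤ t^{-3/2} ∫ φ` for `t ≥ 1`,
because `d ≥ 3` (`Mild.decay`). As `t^{-3/2}` is integrable at infinity, the total relative
dissipation after a large time `t₀` is at most `1/2`, so the mass stays above half its value at
`t₀`, which is positive (`Mild.mass_half`, `Mild.mass_pos`, `Mild.exists_lower_bound`).
-/

open MeasureTheory Filter Set Metric
open scoped ENNReal

/-- The `d`-dimensional heat kernel `p_t(x,y) = (2πt)^{-d/2} exp(-‖x-y‖²/(2t))`. -/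
noncomputable def heatKernel (d : ℕ) (t : ℝ) (x y : EuclideanSpace ℝ (Fin d)) : ℝ :=
  (2 * Real.pi * t) ^ (-(d : ℝ) / 2) * Real.exp (-‖x - y‖ ^ 2 / (2 * t))

/-- `u : (0,∞) × ℝ^d → [0,∞)` is a mild solution of `∂ₜu = (1/2)Δu - u²` with initial
data `φ` if it is measurable, nonnegative, and satisfies for all `t > 0`, `x ∈ ℝ^d`:
`u(t,x) + ∫₀ᵗ ∫ p_s(x,y) u(t-s,y)² dy ds = ∫ p_t(x,y) φ(y) dy` (equality in `[0,∞]`). -/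
def IsMildSolution (d : ℕ) (φ : EuclideanSpace ℝ (Fin d) → ℝ)
    (u : ℝ → EuclideanSpace ℝ (Fin d) → ℝ) : Prop :=
  Measurable (Function.uncurry u) ∧
  (∀ t x, 0 ≤ u t x) ∧
  ∀ t x, 0 < t →
    ENNReal.ofReal (u t x) +
        (∫⁻ s in Set.Ioo (0 : ℝ) t, ∫⁻ y,
          ENNReal.ofReal (heatKernel d s x y * u (t - s) y ^ 2)) =
      ∫⁻ y, ENNReal.ofReal (heatKernel d t x y * φ y)

namespace HeatMild

/-- `ℝ^d` with its Euclidean norm. -/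
abbrev Sp (d : ℕ) : Type := EuclideanSpace ℝ (Fin d)

/-- The heat kernel with values in `[0,∞]`. -/
noncomputable def K (d : ℕ) (t : ℝ) (x y : Sp d) : ℝ≥0∞ := ENNReal.ofReal (heatKernel d t x y)

/-- The heat semigroup acting on `[0,∞]`-valued functions. -/
noncomputable def P (d : ℕ) (t : ℝ) (f : Sp d → ℝ≥0∞) (x : Sp d) : ℝ≥0∞ := ∫⁻ y, K d t x y * f y

/-- The mild equation in `[0,∞]`, with the time variable of the inner integral reversed, so that
the source at time `r ∈ (0,t)` is propagated over time `t - r`. -/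
def Mild (d : ℕ) (φ : Sp d → ℝ≥0∞) (U : ℝ → Sp d → ℝ≥0∞) : Prop :=
  Measurable (Function.uncurry U) ∧ ∀ t x, 0 < t →
    U t x + ∫⁻ r in Ioo 0 t, P d (t - r) (fun y => U r y ^ 2) x = P d t φ x

variable {d : ℕ}

/-! ### The heat kernel -/

lemma heatKernel_nonneg {t : ℝ} (ht : 0 < t) (x y : Sp d) : 0 ≤ heatKernel d t x y := by
  unfold heatKernel; positivity

lemma heatKernel_comm (t : ℝ) (x y : Sp d) : heatKernel d t x y = heatKernel d t y x := by
  unfold heatKernel; rw [norm_sub_rev]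

lemma K_comm (t : ℝ) (x y : Sp d) : K d t x y = K d t y x := by
  unfold K; rw [heatKernel_comm]

lemma measurable_K : Measurable fun p : ℝ × Sp d × Sp d => K d p.1 p.2.1 p.2.2 := by
  unfold K heatKernel
  fun_prop

@[fun_prop]
lemma measurable_K' {α : Type*} [MeasurableSpace α] {a : α → ℝ} {b c : α → Sp d}
    (ha : Measurable a) (hb : Measurable b) (hc : Measurable c) :
    Measurable fun p => K d (a p) (b p) (c p) :=
  measurable_K.comp (ha.prodMk (hb.prodMk hc))

lemma integral_heatKernel {t : ℝ} (ht : 0 < t) (x : Sp d) :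
    ∫ y, heatKernel d t x y = 1 := by
  have h1 : ∫ y : Sp d, Real.exp (-‖x - y‖ ^ 2 / (2 * t)) = (2 * Real.pi * t) ^ ((d : ℝ) / 2) := by
    have := GaussianFourier.integral_rexp_neg_mul_sq_norm (V := Sp d) (b := 1 / (2 * t))
      (by positivity)
    rw [← integral_sub_left_eq_self (fun v : Sp d => Real.exp (-(1 / (2 * t)) * ‖v‖ ^ 2)) volume x,
      finrank_euclideanSpace_fin] at this
    convert this using 2
    · ext y; congr 1; ring
    · field_simp
  unfold heatKernel
  rw [integral_const_mul, h1, ← Real.rpow_add (by positivity)]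
  rw [show -(d : ℝ) / 2 + d / 2 = 0 by ring, Real.rpow_zero]

lemma integrable_heatKernel {t : ℝ} (ht : 0 < t) (x : Sp d) :
    Integrable (heatKernel d t x) := by
  by_contra h
  have := integral_heatKernel ht x
  rw [integral_undef h] at this
  exact zero_ne_one this

lemma lintegral_K {t : ℝ} (ht : 0 < t) (x : Sp d) : ∫⁻ y, K d t x y = 1 := by
  unfold K
  rw [← ofReal_integral_eq_lintegral_ofReal (integrable_heatKernel ht x)
    (Eventually.of_forall fun y => heatKernel_nonneg ht x y), integral_heatKernel ht]
  simp

lemma lintegral_K' {t : ℝ} (ht : 0 < t) (y : Sp d) : ∫⁻ x, K d t x y = 1 := by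
  simp_rw [K_comm t _ y]; exact lintegral_K ht y

/-- Completing the square in the product of two Gaussian densities. -/
lemma heatKernel_mul {s r : ℝ} (hs : 0 < s) (hr : 0 < r) (x y z : Sp d) :
    heatKernel d s x y * heatKernel d r y z = heatKernel d (s + r) x z *
      heatKernel d (s * r / (s + r)) ((s + r)⁻¹ • (r • x + s • z)) y := by
  unfold heatKernel
  rw [mul_mul_mul_comm, mul_mul_mul_comm (_ ^ _) (Real.exp _) (_ ^ _), ← Real.exp_add,
    ← Real.exp_add, ← Real.mul_rpow (by positivity) (by positivity),
    ← Real.mul_rpow (by positivity) (by positivity)]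
  congr 2
  · field_simp
  · have hsr : s + r ≠ 0 := by positivity
    have e1 : (s + r)⁻¹ • (r • x + s • z) - y = (s + r)⁻¹ • (r • (x - y) + s • (z - y)) := by
      have : y = (s + r)⁻¹ • ((s + r) • y) := by rw [smul_smul, inv_mul_cancel₀ hsr, one_smul]
      nth_rw 1 [this]
      rw [← smul_sub]; congr 1; module
    have e2 : x - z = (x - y) - (z - y) := by abel
    rw [e1, e2, norm_sub_rev y z]
    generalize x - y = a
    generalize z - y = b
    rw [norm_smul, mul_pow, norm_add_sq_real, norm_sub_sq_real, norm_smul, norm_smul,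
      real_inner_smul_left, real_inner_smul_right]
    simp only [Real.norm_eq_abs, mul_pow, sq_abs]
    field_simp
    ring

/-- Chapman–Kolmogorov. -/
lemma lintegral_K_mul_K {s r : ℝ} (hs : 0 < s) (hr : 0 < r) (x z : Sp d) :
    ∫⁻ y, K d s x y * K d r y z = K d (s + r) x z := by
  have : ∀ y, K d s x y * K d r y z = K d (s + r) x z *
      K d (s * r / (s + r)) ((s + r)⁻¹ • (r • x + s • z)) y := by
    intro y
    unfold K
    rw [← ENNReal.ofReal_mul (heatKernel_nonneg hs x y), heatKernel_mul hs hr,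
      ENNReal.ofReal_mul (heatKernel_nonneg (by positivity) _ _)]
  simp_rw [this]
  rw [lintegral_const_mul _ (by fun_prop),
    lintegral_K (by positivity), mul_one]

lemma P_P {s r : ℝ} (hs : 0 < s) (hr : 0 < r) {f : Sp d → ℝ≥0∞} (hf : Measurable f) (x : Sp d) :
    P d s (P d r f) x = P d (s + r) f x := by
  unfold P
  simp_rw [← lintegral_K_mul_K hs hr x]
  calc ∫⁻ y, K d s x y * ∫⁻ z, K d r y z * f z
      = ∫⁻ y, ∫⁻ z, K d s x y * (K d r y z * f z) := by
        congr 1; ext y; rw [lintegral_const_mul]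
        fun_prop
    _ = ∫⁻ z, ∫⁻ y, K d s x y * (K d r y z * f z) := by
        rw [lintegral_lintegral_swap]
        apply Measurable.aemeasurable
        unfold Function.uncurry
        fun_prop
    _ = _ := by
        congr 1; ext z
        rw [← lintegral_mul_const]
        · congr 1; ext y; ring
        · fun_prop

lemma P_mono {t : ℝ} {f g : Sp d → ℝ≥0∞} (h : ∀ y, f y ≤ g y) (x : Sp d) :
    P d t f x ≤ P d t g x :=
  lintegral_mono fun y => mul_le_mul_right (h y) _

lemma P_const {t : ℝ} (ht : 0 < t) (c : ℝ≥0∞) (x : Sp d) : P d t (fun _ => c) x = c := by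
  unfold P
  rw [lintegral_mul_const _ (by fun_prop),
    lintegral_K ht, one_mul]

lemma P_le_const {t : ℝ} (ht : 0 < t) {f : Sp d → ℝ≥0∞} {c : ℝ≥0∞} (h : ∀ y, f y ≤ c) (x : Sp d) :
    P d t f x ≤ c :=
  (P_mono h x).trans (P_const ht c x).le

lemma measurable_P {α : Type*} [MeasurableSpace α] {a : α → ℝ} {b : α → Sp d}
    {f : α → Sp d → ℝ≥0∞} (ha : Measurable a) (hb : Measurable b)
    (hf : Measurable (Function.uncurry f)) :
    Measurable fun p => P d (a p) (f p) (b p) := by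
  unfold P
  apply Measurable.lintegral_prod_right (f := fun p y => K d (a p) (b p) y * f p y)
  exact (measurable_K' (ha.comp measurable_fst) (hb.comp measurable_fst) measurable_snd).mul hf

/-- The heat semigroup is symmetric with respect to Lebesgue measure. -/
lemma lintegral_P_mul {t : ℝ} {f g : Sp d → ℝ≥0∞} (hf : Measurable f) (hg : Measurable g) :
    ∫⁻ x, P d t f x * g x = ∫⁻ x, f x * P d t g x := by
  unfold P
  calc ∫⁻ x, (∫⁻ y, K d t x y * f y) * g x
      = ∫⁻ x, ∫⁻ y, K d t x y * f y * g x := by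
        congr 1; ext x; rw [lintegral_mul_const]
        fun_prop
    _ = ∫⁻ y, ∫⁻ x, K d t x y * f y * g x := by
        rw [lintegral_lintegral_swap]
        apply Measurable.aemeasurable
        unfold Function.uncurry
        fun_prop
    _ = _ := by
        congr 1; ext y
        rw [← lintegral_const_mul]
        · congr 1; ext x; rw [K_comm t y x]; ring
        · fun_prop

/-- Tonelli on the triangle `0 < q < r < t`. -/
lemma lintegral_triangle {h : ℝ → ℝ → ℝ≥0∞} (hh : Measurable (Function.uncurry h)) (t : ℝ) :
    ∫⁻ r in Ioo 0 t, ∫⁻ q in Ioo 0 r, h r q = ∫⁻ q in Ioo 0 t, ∫⁻ r in Ioo q t, h r q := by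
  have hS : MeasurableSet {p : ℝ × ℝ | 0 < p.2 ∧ p.2 < p.1 ∧ p.1 < t} :=
    (measurableSet_lt measurable_const measurable_snd).inter
      ((measurableSet_lt measurable_snd measurable_fst).inter
        (measurableSet_lt measurable_fst measurable_const))
  have e1 : ∫⁻ r in Ioo 0 t, ∫⁻ q in Ioo 0 r, h r q =
      ∫⁻ r, ∫⁻ q, {p : ℝ × ℝ | 0 < p.2 ∧ p.2 < p.1 ∧ p.1 < t}.indicator (Function.uncurry h)
        (r, q) := by
    rw [← lintegral_indicator measurableSet_Ioo]
    congr 1; ext r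
    by_cases hr : r ∈ Ioo 0 t
    · rw [indicator_of_mem hr, ← lintegral_indicator measurableSet_Ioo]
      congr 1; ext q
      simp only [indicator, mem_Ioo, mem_ofPred_eq, Function.uncurry]
      congr 1; simp [hr.2]
    · rw [indicator_of_notMem hr, eq_comm]
      rw [← lintegral_zero (μ := (volume : Measure ℝ))]
      congr 1; ext q
      simp only [indicator, mem_ofPred_eq]
      rw [if_neg]
      rintro ⟨h1, h2, h3⟩
      exact hr ⟨h1.trans h2, h3⟩
  have e2 : ∫⁻ q in Ioo 0 t, ∫⁻ r in Ioo q t, h r q =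
      ∫⁻ q, ∫⁻ r, {p : ℝ × ℝ | 0 < p.2 ∧ p.2 < p.1 ∧ p.1 < t}.indicator (Function.uncurry h)
        (r, q) := by
    rw [← lintegral_indicator measurableSet_Ioo]
    congr 1; ext q
    by_cases hr : q ∈ Ioo 0 t
    · rw [indicator_of_mem hr, ← lintegral_indicator measurableSet_Ioo]
      congr 1; ext r
      simp only [indicator, mem_Ioo, mem_ofPred_eq, Function.uncurry]
      congr 1; simp [hr.1]
    · rw [indicator_of_notMem hr, eq_comm]
      rw [← lintegral_zero (μ := (volume : Measure ℝ))]
      congr 1; ext r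
      simp only [indicator, mem_ofPred_eq]
      rw [if_neg]
      rintro ⟨h1, h2, h3⟩
      exact hr ⟨h1, h2.trans h3⟩
  rw [e1, e2, lintegral_lintegral_swap]
  exact (hh.indicator hS).aemeasurable

/-! ### Mild solutions and their test-function identities -/

lemma lintegral_Ioo_reflect (f : ℝ → ℝ≥0∞) (t : ℝ) :
    ∫⁻ s in Ioo 0 t, f (t - s) = ∫⁻ r in Ioo 0 t, f r := by
  rw [← lintegral_indicator measurableSet_Ioo, ← lintegral_indicator measurableSet_Ioo,
    ← lintegral_sub_left_eq_self ((Ioo 0 t).indicator f) t]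
  congr 1; ext s
  simp only [indicator, mem_Ioo]
  congr 1
  simp only [eq_iff_iff]
  constructor <;> rintro ⟨h1, h2⟩ <;> constructor <;> linarith

lemma mild_of_isMildSolution {φ : Sp d → ℝ} {u : ℝ → Sp d → ℝ}
    (h : IsMildSolution d φ u) :
    Mild d (fun x => ENNReal.ofReal (φ x)) (fun t x => ENNReal.ofReal (u t x)) := by
  obtain ⟨hm, h0, he⟩ := h
  refine ⟨hm.ennreal_ofReal, fun t x ht => ?_⟩
  have e1 : ∫⁻ y, ENNReal.ofReal (heatKernel d t x y * φ y) =
      P d t (fun x => ENNReal.ofReal (φ x)) x := by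
    unfold P K
    simp_rw [fun y => ENNReal.ofReal_mul (q := φ y) (heatKernel_nonneg ht x y)]
  rw [← e1, ← he t x ht, ← lintegral_Ioo_reflect]
  congr 1
  refine setLIntegral_congr_fun measurableSet_Ioo fun s hs => ?_
  simp only [P, K, sub_sub_cancel]
  congr 1; ext y
  rw [ENNReal.ofReal_mul (heatKernel_nonneg hs.1 x y), ENNReal.ofReal_pow (h0 _ _)]

section
variable {φ : Sp d → ℝ≥0∞} {U : ℝ → Sp d → ℝ≥0∞}

lemma Mild.meas (h : Mild d φ U) {α : Type*} [MeasurableSpace α] {a : α → ℝ} {b : α → Sp d}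
    (ha : Measurable a) (hb : Measurable b) : Measurable fun p => U (a p) (b p) :=
  h.1.comp (ha.prodMk hb)

lemma Mild.meas_P (h : Mild d φ U) {α : Type*} [MeasurableSpace α] {a c : α → ℝ} {b : α → Sp d}
    (ha : Measurable a) (hb : Measurable b) (hc : Measurable c) :
    Measurable fun p => P d (a p) (fun y => U (c p) y ^ 2) (b p) :=
  measurable_P ha hb ((h.meas (hc.comp measurable_fst) measurable_snd).pow_const 2)

lemma Mild.le_P (h : Mild d φ U) {t : ℝ} (ht : 0 < t) (x : Sp d) : U t x ≤ P d t φ x := by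
  rw [← h.2 t x ht]; exact le_self_add

/-- The mild equation integrated against a nonnegative test function. -/
lemma Mild.test (h : Mild d φ U) (hφ : Measurable φ) {f : Sp d → ℝ≥0∞} (hf : Measurable f)
    {t : ℝ} (ht : 0 < t) :
    (∫⁻ x, U t x * f x) + ∫⁻ q in Ioo 0 t, ∫⁻ x, U q x ^ 2 * P d (t - q) f x =
      ∫⁻ x, φ x * P d t f x := by
  have h1 : Measurable fun x => U t x := h.meas measurable_const measurable_id
  rw [← lintegral_P_mul hφ hf]
  simp_rw [← fun x => h.2 t x ht, add_mul]
  rw [lintegral_add_left (f := fun x => U t x * f x) (h1.mul hf)]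
  congr 1
  calc ∫⁻ q in Ioo 0 t, ∫⁻ x, U q x ^ 2 * P d (t - q) f x
      = ∫⁻ q in Ioo 0 t, ∫⁻ x, P d (t - q) (fun y => U q y ^ 2) x * f x := by
        congr 1; ext q
        rw [lintegral_P_mul _ hf]
        exact (h.meas measurable_const measurable_id).pow_const 2
    _ = ∫⁻ x, ∫⁻ q in Ioo 0 t, P d (t - q) (fun y => U q y ^ 2) x * f x := by
        rw [lintegral_lintegral_swap]
        apply Measurable.aemeasurable
        exact (h.meas_P (measurable_const.sub measurable_fst) measurable_snd measurable_fst).mul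
          (hf.comp measurable_snd)
    _ = _ := by
        congr 1; ext x
        rw [lintegral_mul_const]
        exact h.meas_P (measurable_const.sub measurable_id) measurable_const measurable_id

/-- Conservation law for the total mass. -/
lemma Mild.mass (h : Mild d φ U) (hφ : Measurable φ) {t : ℝ} (ht : 0 < t) :
    (∫⁻ x, U t x) + ∫⁻ q in Ioo 0 t, ∫⁻ x, U q x ^ 2 = ∫⁻ x, φ x := by
  have := h.test hφ (f := fun _ => 1) measurable_const ht
  simp only [P_const ht, mul_one] at this
  rw [← this]
  congr 1
  refine setLIntegral_congr_fun measurableSet_Ioo fun q hq => ?_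
  have hq' : 0 < t - q := sub_pos.2 hq.2
  simp only [P_const hq', mul_one]

lemma Mild.meas_sq (h : Mild d φ U) : Measurable fun q => ∫⁻ x, U q x ^ 2 :=
  Measurable.lintegral_prod_right (f := fun q x => U q x ^ 2)
    ((h.meas measurable_fst measurable_snd).pow_const 2)

lemma Mild.mass_le (h : Mild d φ U) (hφ : Measurable φ) {t : ℝ} (ht : 0 < t) :
    ∫⁻ x, U t x ≤ ∫⁻ x, φ x := by
  rw [← h.mass hφ ht]; exact le_self_add

/-- Conservation of mass between two positive times. -/
lemma Mild.mass_between (h : Mild d φ U) (hφ : Measurable φ) (hφi : ∫⁻ x, φ x ≠ ∞) {s t : ℝ}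
    (hs : 0 < s) (hst : s ≤ t) :
    (∫⁻ x, U t x) + ∫⁻ q in Ico s t, ∫⁻ x, U q x ^ 2 = ∫⁻ x, U s x := by
  have h1 := h.mass hφ hs
  have h2 := h.mass hφ (hs.trans_le hst)
  rw [← Ioo_union_Ico_eq_Ioo hs hst,
    lintegral_union measurableSet_Ico (by
      rw [Set.disjoint_left]; intro x hx hx'; exact absurd hx.2 (not_lt.2 hx'.1)), ← h1] at h2
  have hfin : ∫⁻ q in Ioo 0 s, ∫⁻ x, U q x ^ 2 ≠ ∞ :=
    ne_top_of_le_ne_top hφi (h1 ▸ le_add_self)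
  rw [← ENNReal.add_left_inj hfin, ← h2]
  ring

lemma Mild.mass_anti (h : Mild d φ U) (hφ : Measurable φ) (hφi : ∫⁻ x, φ x ≠ ∞) {s t : ℝ}
    (hs : 0 < s) (hst : s ≤ t) : ∫⁻ x, U t x ≤ ∫⁻ x, U s x := by
  rw [← h.mass_between hφ hφi hs hst]; exact le_self_add

/-! ### Comparison of mild solutions -/

/-- The total weight that the damped equation puts on the time interval `(q, t)`. -/
lemma lintegral_exp_weight {l : ℝ} (hl : 0 < l) {q t : ℝ} (hqt : q ≤ t) :
    ∫⁻ r in Ioo q t, ENNReal.ofReal (l * Real.exp (-l * (t - r))) =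
      ENNReal.ofReal (1 - Real.exp (-l * (t - q))) := by
  have hc : Continuous fun r : ℝ => l * Real.exp (-l * (t - r)) := by fun_prop
  rw [← ofReal_integral_eq_lintegral_ofReal
    ((hc.integrableOn_Icc (a := q) (b := t)).mono_set Ioo_subset_Icc_self)
    (Eventually.of_forall fun r => by positivity)]
  congr 1
  rw [← integral_Ioc_eq_integral_Ioo, ← intervalIntegral.integral_of_le hqt,
    intervalIntegral.integral_eq_sub_of_hasDerivAt (f := fun r => Real.exp (-l * (t - r)))
      _ (hc.intervalIntegrable _ _)]
  · simp
  · intro r _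
    have : HasDerivAt (fun r => -l * (t - r)) l r := by
      simpa using ((hasDerivAt_id r).const_sub t).const_mul (-l)
    simpa [mul_comm] using this.exp

/-- The heat operator commutes with integration over a parameter. -/
lemma P_lintegral {s : ℝ} {f : ℝ → Sp d → ℝ≥0∞} (hf : Measurable (Function.uncurry f))
    (A : Set ℝ) (x : Sp d) :
    P d s (fun y => ∫⁻ q in A, f q y) x = ∫⁻ q in A, P d s (f q) x := by
  unfold P
  rw [lintegral_lintegral_swap]
  · congr 1; ext y
    rw [lintegral_const_mul]
    exact hf.comp (measurable_id.prodMk measurable_const)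
  · apply Measurable.aemeasurable
    exact (measurable_K' measurable_const measurable_const measurable_snd).mul hf

/-- Duhamel's formula relative to the damped semigroup `e^{-ls} P_s`. The source is `l U - U²`, with
`U²` moved to the left-hand side to stay in `[0,∞]`; it is an increasing function of `U` on
`[0, l/2]`, which the source `-U²` of the undamped equation is not. -/
lemma Mild.damped (h : Mild d φ U) (hφ : Measurable φ) {N : ℝ≥0∞} (hN : N ≠ ∞)
    (hφN : ∀ x, φ x ≤ N) {l : ℝ} (hl : 0 < l) {t : ℝ} (ht : 0 < t) (x : Sp d) :
    U t x + ∫⁻ r in Ioo 0 t,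
        ENNReal.ofReal (Real.exp (-l * (t - r))) * P d (t - r) (fun y => U r y ^ 2) x =
      ENNReal.ofReal (Real.exp (-l * t)) * P d t φ x + ∫⁻ r in Ioo 0 t,
        ENNReal.ofReal (l * Real.exp (-l * (t - r))) * P d (t - r) (U r) x := by
  set Y := ∫⁻ r in Ioo 0 t, P d (t - r) (fun y => U r y ^ 2) x with hY
  set Z := ∫⁻ r in Ioo 0 t,
        ENNReal.ofReal (Real.exp (-l * (t - r))) * P d (t - r) (fun y => U r y ^ 2) x with hZ
  set X := ∫⁻ r in Ioo 0 t,
        ENNReal.ofReal (l * Real.exp (-l * (t - r))) * P d (t - r) (U r) x with hX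
  set Z' := ∫⁻ r in Ioo 0 t,
        ENNReal.ofReal (1 - Real.exp (-l * (t - r))) * P d (t - r) (fun y => U r y ^ 2) x with hZ'
  have hexp : ∀ s : ℝ, 0 ≤ s →
      ENNReal.ofReal (Real.exp (-l * s)) + ENNReal.ofReal (1 - Real.exp (-l * s)) = 1 := by
    intro s hs
    have : Real.exp (-l * s) ≤ 1 := Real.exp_le_one_iff.2 (by nlinarith)
    rw [← ENNReal.ofReal_add (Real.exp_pos _).le (by linarith)]
    simp
  have hmP : Measurable fun r => P d (t - r) (fun y => U r y ^ 2) x :=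
    h.meas_P (measurable_const.sub measurable_id) measurable_const measurable_id
  have hmP1 : Measurable fun r => P d (t - r) (U r) x :=
    measurable_P (measurable_const.sub measurable_id) measurable_const h.1
  have e1 : Y = Z + Z' := by
    rw [hY, hZ, hZ', ← lintegral_add_left (by fun_prop)]
    refine setLIntegral_congr_fun measurableSet_Ioo fun r hr => ?_
    rw [← add_mul, hexp _ (sub_nonneg.2 hr.2.le), one_mul]
  have e2 : U t x + Y = P d t φ x := h.2 t x ht
  have e3 : X + Z' = ENNReal.ofReal (1 - Real.exp (-l * t)) * P d t φ x := by
    have a1 : ∀ r ∈ Ioo 0 t, P d (t - r) (U r) x +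
        ∫⁻ q in Ioo 0 r, P d (t - q) (fun y => U q y ^ 2) x = P d t φ x := by
      intro r hr
      have b1 : P d (t - r) (P d r φ) x = P d t φ x := by
        rw [P_P (sub_pos.2 hr.2) hr.1 hφ]; simp
      rw [← b1]
      have b2 : P d r φ = fun y => U r y +
          ∫⁻ q in Ioo 0 r, P d (r - q) (fun y => U q y ^ 2) y := by
        ext y; rw [h.2 r y hr.1]
      have b3 : P d (t - r) (P d r φ) x = P d (t - r) (U r) x +
          P d (t - r) (fun y => ∫⁻ q in Ioo 0 r, P d (r - q) (fun y => U q y ^ 2) y) x := by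
        rw [b2]
        unfold P
        rw [← lintegral_add_left]
        · simp_rw [mul_add]
        · exact (measurable_K' measurable_const measurable_const measurable_id).mul
            (h.meas measurable_const measurable_id)
      rw [b3, P_lintegral]
      · congr 1
        refine setLIntegral_congr_fun measurableSet_Ioo fun q hq => ?_
        have hm : Measurable fun y => U q y ^ 2 :=
          (h.meas measurable_const measurable_id).pow_const 2
        rw [P_P (sub_pos.2 hr.2) (sub_pos.2 hq.2) hm]
        congr 1; ring
      · exact h.meas_P (measurable_const.sub measurable_fst) measurable_snd measurable_fst
    have a2 : Z' = ∫⁻ r in Ioo 0 t, ENNReal.ofReal (l * Real.exp (-l * (t - r))) *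
        ∫⁻ q in Ioo 0 r, P d (t - q) (fun y => U q y ^ 2) x := by
      have c1 : ∀ r, ENNReal.ofReal (l * Real.exp (-l * (t - r))) *
          ∫⁻ q in Ioo 0 r, P d (t - q) (fun y => U q y ^ 2) x = ∫⁻ q in Ioo 0 r,
          ENNReal.ofReal (l * Real.exp (-l * (t - r))) * P d (t - q) (fun y => U q y ^ 2) x := by
        intro r; rw [lintegral_const_mul _ hmP]
      simp_rw [c1]
      rw [lintegral_triangle]
      · refine setLIntegral_congr_fun measurableSet_Ioo fun q hq => ?_
        rw [lintegral_mul_const _ (by fun_prop), lintegral_exp_weight hl hq.2.le]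
      · exact Measurable.mul (by fun_prop) (hmP.comp measurable_snd)
    have hmX : Measurable fun r =>
        ENNReal.ofReal (l * Real.exp (-l * (t - r))) * P d (t - r) (U r) x :=
      Measurable.mul (by fun_prop) hmP1
    rw [hX, a2, ← lintegral_add_left hmX]
    have a3 := lintegral_exp_weight hl ht.le
    rw [sub_zero] at a3
    rw [← a3, ← lintegral_mul_const _ (by fun_prop)]
    refine setLIntegral_congr_fun measurableSet_Ioo fun r hr => ?_
    rw [← mul_add, a1 r hr]
  have hfin : Z' ≠ ∞ := by
    refine ne_top_of_le_ne_top hN ?_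
    calc Z' ≤ Y := e1 ▸ le_add_self
      _ ≤ P d t φ x := e2 ▸ le_add_self
      _ ≤ N := P_le_const ht hφN x
  rw [← ENNReal.add_left_inj hfin, add_assoc, ← e1, e2, add_assoc, e3, ← add_mul, hexp t ht.le,
    one_mul]

end

/-- Monotone dependence of bounded mild solutions on the initial data. Both solutions take values in
`[0, N]`, so damping at rate `2 N` makes the source monotone. -/
lemma Mild.comparison {φ ψ : Sp d → ℝ≥0∞} {a b : ℝ → Sp d → ℝ≥0∞}
    (hb : Mild d φ b) (ha : Mild d ψ a) (hφ : Measurable φ) (hψ : Measurable ψ) {N : ℝ}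
    (hN : 0 < N) (hle : ∀ x, φ x ≤ ψ x) (hψN : ∀ x, ψ x ≤ ENNReal.ofReal N)
    {t : ℝ} (ht : 0 < t) (x : Sp d) : b t x ≤ a t x := by
  have hφN : ∀ x, φ x ≤ ENNReal.ofReal N := fun x => (hle x).trans (hψN x)
  have haN : ∀ s y, 0 < s → a s y ≤ ENNReal.ofReal N := fun s y hs =>
    (ha.le_P hs y).trans (P_le_const hs hψN y)
  have hbN : ∀ s y, 0 < s → b s y ≤ ENNReal.ofReal N := fun s y hs =>
    (hb.le_P hs y).trans (P_le_const hs hφN y)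
  -- The largest violation of the inequality up to time `t`.
  set D : ℝ≥0∞ := ⨆ (s : Ioc 0 t) (y : Sp d), b s y - a s y with hD
  have hDN : D ≤ ENNReal.ofReal N :=
    iSup_le fun s => iSup_le fun y => tsub_le_self.trans (hbN s y s.2.1)
  have hDfin : D ≠ ∞ := ne_top_of_le_ne_top ENNReal.ofReal_ne_top hDN
  have hbD : ∀ s ∈ Ioc 0 t, ∀ y, b s y ≤ a s y + D := by
    intro s hs y
    have : b s y - a s y ≤ D :=
      le_iSup_of_le (⟨s, hs⟩ : Ioc 0 t) (le_iSup (fun y => b s y - a s y) y)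
    exact tsub_le_iff_left.1 this
  have hl : (0 : ℝ) < 2 * N := by positivity
  -- Monotonicity of `2 N U - U²` on `[0, N]`, with its Lipschitz constant `2 N`.
  have hpt : ∀ s ∈ Ioc 0 t, ∀ y, ENNReal.ofReal (2 * N) * b s y + a s y ^ 2 ≤
      ENNReal.ofReal (2 * N) * a s y + b s y ^ 2 + ENNReal.ofReal (2 * N) * D := by
    intro s hs y
    have h1 := haN s y hs.1
    have h2 := hbN s y hs.1
    have h3 := hbD s hs y
    clear_value D
    have f1 : a s y ≠ ∞ := ne_top_of_le_ne_top ENNReal.ofReal_ne_top h1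
    have f2 : b s y ≠ ∞ := ne_top_of_le_ne_top ENNReal.ofReal_ne_top h2
    generalize a s y = α at *
    generalize b s y = β at *
    lift α to NNReal using f1
    lift β to NNReal using f2
    lift D to NNReal using hDfin
    have g1 : (α : ℝ) ≤ N := by
      rwa [← ENNReal.ofReal_coe_nnreal, ENNReal.ofReal_le_ofReal_iff hN.le] at h1
    have g2 : (β : ℝ) ≤ N := by
      rwa [← ENNReal.ofReal_coe_nnreal, ENNReal.ofReal_le_ofReal_iff hN.le] at h2
    have g3 : (β : ℝ) ≤ α + D := by exact_mod_cast h3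
    rw [← ENNReal.ofReal_coe_nnreal (p := α), ← ENNReal.ofReal_coe_nnreal (p := β),
      ← ENNReal.ofReal_coe_nnreal (p := D)]
    rw [← ENNReal.ofReal_mul hl.le, ← ENNReal.ofReal_mul hl.le, ← ENNReal.ofReal_mul hl.le,
      ← ENNReal.ofReal_pow α.coe_nonneg, ← ENNReal.ofReal_pow β.coe_nonneg,
      ← ENNReal.ofReal_add (by positivity) (by positivity),
      ← ENNReal.ofReal_add (by positivity) (by positivity),
      ← ENNReal.ofReal_add (by positivity) (by positivity)]
    apply ENNReal.ofReal_le_ofReal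
    have a0 : (0 : ℝ) ≤ α := α.2
    have b0 : (0 : ℝ) ≤ β := β.2
    have d0 : (0 : ℝ) ≤ D := D.2
    rcases le_total (β : ℝ) α with hc | hc
    · nlinarith [mul_nonneg (sub_nonneg.2 hc) (by linarith : 0 ≤ 2 * N - α - β)]
    · nlinarith [mul_nonneg hl.le (by linarith : 0 ≤ α + D - (β : ℝ))]
  -- One iteration of the damped equation contracts the violation, since the weight
  -- `2 N e^{-2 N (s - r)}` has integral less than `1`.
  have hkey : ∀ s ∈ Ioc 0 t, ∀ y,
      b s y ≤ a s y + ENNReal.ofReal (1 - Real.exp (-(2 * N) * t)) * D := by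
    intro s hs y
    have db := hb.damped hφ ENNReal.ofReal_ne_top hφN hl hs.1 y
    have da := ha.damped hψ ENNReal.ofReal_ne_top hψN hl hs.1 y
    set Zb := ∫⁻ r in Ioo 0 s,
        ENNReal.ofReal (Real.exp (-(2 * N) * (s - r))) * P d (s - r) (fun y => b r y ^ 2) y with hZb
    set Za := ∫⁻ r in Ioo 0 s,
        ENNReal.ofReal (Real.exp (-(2 * N) * (s - r))) * P d (s - r) (fun y => a r y ^ 2) y with hZa
    set Xb := ∫⁻ r in Ioo 0 s,
        ENNReal.ofReal (2 * N * Real.exp (-(2 * N) * (s - r))) * P d (s - r) (b r) y with hXb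
    set Xa := ∫⁻ r in Ioo 0 s,
        ENNReal.ofReal (2 * N * Real.exp (-(2 * N) * (s - r))) * P d (s - r) (a r) y with hXa
    have hms : ∀ {φ : Sp d → ℝ≥0∞} {c : ℝ → Sp d → ℝ≥0∞}, Mild d φ c →
        Measurable fun r => ENNReal.ofReal (Real.exp (-(2 * N) * (s - r))) *
          P d (s - r) (fun y => c r y ^ 2) y := fun hc => Measurable.mul (by fun_prop)
        (hc.meas_P (measurable_const.sub measurable_id) measurable_const measurable_id)
    have hm1 : ∀ {φ : Sp d → ℝ≥0∞} {c : ℝ → Sp d → ℝ≥0∞}, Mild d φ c →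
        Measurable fun r => ENNReal.ofReal (2 * N * Real.exp (-(2 * N) * (s - r))) *
          P d (s - r) (c r) y := fun hc => Measurable.mul (by fun_prop)
        (measurable_P (measurable_const.sub measurable_id) measurable_const hc.1)
    have hfin : ∀ {φ : Sp d → ℝ≥0∞} {c : ℝ → Sp d → ℝ≥0∞}, Mild d φ c →
        (∀ x, φ x ≤ ENNReal.ofReal N) → ∫⁻ r in Ioo 0 s,
        ENNReal.ofReal (Real.exp (-(2 * N) * (s - r))) * P d (s - r) (fun y => c r y ^ 2) y ≠ ∞ := by
      intro φ c hc hφ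
      refine ne_top_of_le_ne_top ENNReal.ofReal_ne_top (b := ENNReal.ofReal N) ?_
      calc _ ≤ ∫⁻ r in Ioo 0 s, P d (s - r) (fun y => c r y ^ 2) y := by
            refine setLIntegral_mono' measurableSet_Ioo fun r hr => ?_
            refine mul_le_of_le_one_left (zero_le) ?_
            rw [ENNReal.ofReal_le_one, Real.exp_le_one_iff]
            nlinarith [hr.2]
        _ ≤ P d s φ y := hc.2 s y hs.1 ▸ le_add_self
        _ ≤ _ := P_le_const hs.1 hφ y
    have hX : Xb + Za ≤ Xa + Zb + ENNReal.ofReal (1 - Real.exp (-(2 * N) * t)) * D := by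
      have w : ∫⁻ r in Ioo 0 s, ENNReal.ofReal (2 * N * Real.exp (-(2 * N) * (s - r))) * D ≤
          ENNReal.ofReal (1 - Real.exp (-(2 * N) * t)) * D := by
        rw [lintegral_mul_const _ (by fun_prop), lintegral_exp_weight hl hs.1.le]
        gcongr ENNReal.ofReal (1 - Real.exp ?_) * D
        nlinarith [hs.2]
      refine le_trans ?_ (add_le_add_right w _)
      rw [hXb, hZa, hXa, hZb, ← lintegral_add_left (hm1 hb), ← lintegral_add_left (hm1 ha),
        ← lintegral_add_left (show Measurable fun r =>
          ENNReal.ofReal (2 * N * Real.exp (-(2 * N) * (s - r))) * P d (s - r) (a r) y +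
          ENNReal.ofReal (Real.exp (-(2 * N) * (s - r))) * P d (s - r) (fun y => b r y ^ 2) y
          from (hm1 ha).add (hms hb))]
      refine setLIntegral_mono' measurableSet_Ioo fun r hr => ?_
      have hsr : 0 < s - r := sub_pos.2 hr.2
      have hrt : r ∈ Ioc 0 t := ⟨hr.1, hr.2.le.trans hs.2⟩
      have q1 := P_mono (t := s - r) (hpt r hrt) y
      have mK : Measurable fun z => K d (s - r) y z := by fun_prop
      have ma : Measurable fun z => a r z := ha.meas measurable_const measurable_id
      have mb : Measurable fun z => b r z := hb.meas measurable_const measurable_id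
      have q2 : P d (s - r) (fun z => ENNReal.ofReal (2 * N) * b r z + a r z ^ 2) y =
          ENNReal.ofReal (2 * N) * P d (s - r) (b r) y + P d (s - r) (fun z => a r z ^ 2) y := by
        unfold P
        rw [← lintegral_const_mul _ (by fun_prop), ← lintegral_add_left (by fun_prop)]
        congr 1; ext z; ring
      have q3 : P d (s - r) (fun z => ENNReal.ofReal (2 * N) * a r z + b r z ^ 2 +
            ENNReal.ofReal (2 * N) * D) y =
          ENNReal.ofReal (2 * N) * P d (s - r) (a r) y + P d (s - r) (fun z => b r z ^ 2) y +
            ENNReal.ofReal (2 * N) * D := by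
        conv_rhs => rw [← P_const hsr (ENNReal.ofReal (2 * N) * D) y]
        unfold P
        rw [← lintegral_const_mul _ (by fun_prop), ← lintegral_add_left (by fun_prop),
          ← lintegral_add_left (by fun_prop)]
        congr 1; ext z; ring
      rw [q2, q3] at q1
      have q4 := mul_le_mul_right q1 (ENNReal.ofReal (Real.exp (-(2 * N) * (s - r))))
      have q5 : ENNReal.ofReal (2 * N * Real.exp (-(2 * N) * (s - r))) =
          ENNReal.ofReal (2 * N) * ENNReal.ofReal (Real.exp (-(2 * N) * (s - r))) :=
        ENNReal.ofReal_mul hl.le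
      rw [q5]
      refine le_trans (le_of_eq ?_) (q4.trans (le_of_eq ?_)) <;> ring
    have h1 : b s y + Zb + Za ≤ a s y + Za + Zb +
        ENNReal.ofReal (1 - Real.exp (-(2 * N) * t)) * D := by
      rw [db, da, add_assoc, add_assoc (_ + Xa), add_assoc]
      refine add_le_add (mul_le_mul_right (P_mono hle y) _) ?_
      rw [← add_assoc]; exact hX
    have f1 := hfin hb hφN
    have f2 := hfin ha hψN
    rw [← ENNReal.add_le_add_iff_right (ENNReal.add_ne_top.2 ⟨f1, f2⟩)]
    calc b s y + (Zb + Za) = b s y + Zb + Za := by ring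
      _ ≤ _ := h1
      _ = _ := by ring
  have hD0 : D = 0 := by
    have h1 : D ≤ ENNReal.ofReal (1 - Real.exp (-(2 * N) * t)) * D := by
      refine iSup_le fun s => iSup_le fun y => ?_
      exact tsub_le_iff_left.2 (hkey s s.2 y)
    by_contra hne
    have h2 : ENNReal.ofReal (1 - Real.exp (-(2 * N) * t)) * D < 1 * D := by
      rw [ENNReal.mul_lt_mul_iff_left hne hDfin]
      rw [ENNReal.ofReal_lt_one]
      linarith [Real.exp_pos (-(2 * N) * t)]
    rw [one_mul] at h2
    exact absurd h1 (not_le.2 h2)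
  simpa [hD0] using hbD t ⟨ht, le_rfl⟩ x

/-! ### The heat semigroup acting on smooth functions -/

/-- The action of the heat semigroup on real functions, written as an average over a standard
Gaussian vector `z`: the value at time `s` is the mean of `f (x + √s z)`. -/
noncomputable def A (d : ℕ) (f : Sp d → ℝ) (x : Sp d) (s : ℝ) : ℝ :=
  ∫ z, heatKernel d 1 0 z * f (x + √s • z)

lemma continuous_gauss : Continuous (heatKernel d 1 0) := by
  unfold heatKernel; fun_prop

lemma gauss_eq : heatKernel d 1 0 = fun z : Sp d =>
    (2 * Real.pi) ^ (-(d : ℝ) / 2) * Real.exp (-(‖z‖ ^ 2 / 2)) := by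
  ext z; simp [heatKernel, neg_div]

lemma hasFDerivAt_gauss (z : Sp d) :
    HasFDerivAt (heatKernel d 1 0) (-(heatKernel d 1 0 z) • innerSL ℝ z) z := by
  rw [gauss_eq]
  have h1 : HasFDerivAt (fun z : Sp d => -(‖z‖ ^ 2 / 2)) (-(innerSL ℝ z)) z := by
    have := ((hasStrictFDerivAt_norm_sq z).hasFDerivAt.const_mul (1 / 2 : ℝ)).neg
    have h0 : (fun z : Sp d => -(‖z‖ ^ 2 / 2)) = -fun y => 1 / 2 * ‖y‖ ^ 2 := by
      ext z; simp only [Pi.neg_apply]; rw [one_div_mul_eq_div]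
    rw [h0]
    refine this.congr_fderiv ?_
    ext v; simp
  have := h1.exp.const_mul ((2 * Real.pi) ^ (-(d : ℝ) / 2))
  refine this.congr_fderiv ?_
  ext v
  simp only [smul_apply, neg_apply, smul_eq_mul]
  rw [neg_mul, mul_assoc, mul_neg, mul_neg]

lemma integrable_norm_mul_gauss : Integrable fun z : Sp d => heatKernel d 1 0 z * ‖z‖ := by
  have h2 := (integrable_heatKernel (d := d) (t := 2) two_pos 0).const_mul
    ((2 * Real.pi * 1) ^ (-(d : ℝ) / 2) / (2 * Real.pi * 2) ^ (-(d : ℝ) / 2))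
  refine h2.mono' (continuous_gauss.mul continuous_norm).aestronglyMeasurable
    (Eventually.of_forall fun z => ?_)
  rw [Real.norm_of_nonneg (mul_nonneg (heatKernel_nonneg one_pos _ _) (norm_nonneg _))]
  unfold heatKernel
  have hp : (0 : ℝ) < (2 * Real.pi * 2) ^ (-(d : ℝ) / 2) := by positivity
  have h1 : ‖z‖ * Real.exp (-‖0 - z‖ ^ 2 / (2 * 1)) ≤ Real.exp (-‖0 - z‖ ^ 2 / (2 * 2)) := by
    rw [zero_sub, norm_neg]
    have h3 : ‖z‖ ≤ Real.exp (‖z‖ ^ 2 / 4) := by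
      nlinarith [Real.add_one_le_exp (‖z‖ ^ 2 / 4), sq_nonneg (‖z‖ / 2 - 1)]
    calc ‖z‖ * Real.exp (-‖z‖ ^ 2 / (2 * 1))
        ≤ Real.exp (‖z‖ ^ 2 / 4) * Real.exp (-‖z‖ ^ 2 / (2 * 1)) := by gcongr
      _ = Real.exp (-‖z‖ ^ 2 / (2 * 2)) := by rw [← Real.exp_add]; congr 1; ring
  have hq : (0 : ℝ) < (2 * Real.pi * 1) ^ (-(d : ℝ) / 2) := by positivity
  calc _ = (2 * Real.pi * 1) ^ (-(d : ℝ) / 2) * (‖z‖ * Real.exp (-‖0 - z‖ ^ 2 / (2 * 1))) := by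
        ring
    _ ≤ (2 * Real.pi * 1) ^ (-(d : ℝ) / 2) * Real.exp (-‖0 - z‖ ^ 2 / (2 * 2)) := by gcongr
    _ = _ := by field_simp

section
variable {f : Sp d → ℝ} {C : ℝ}

lemma integrable_A (hf : Continuous f) (hC : ∀ x, |f x| ≤ C) (x : Sp d) (r : ℝ) :
    Integrable fun z => heatKernel d 1 0 z * f (x + r • z) := by
  refine (((integrable_heatKernel (d := d) one_pos 0).mul_const C)).mono'
    (continuous_gauss.mul (by fun_prop)).aestronglyMeasurable (Eventually.of_forall fun z => ?_)
  rw [norm_mul, Real.norm_of_nonneg (heatKernel_nonneg one_pos _ _)]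
  exact mul_le_mul_of_nonneg_left (hC _) (heatKernel_nonneg one_pos _ _)

lemma continuous_A (hf : Continuous f) (hC : ∀ x, |f x| ≤ C) (x : Sp d) :
    Continuous (A d f x) := by
  unfold A
  refine continuous_of_dominated (bound := fun z => heatKernel d 1 0 z * C) (fun s => ?_)
    (fun s => Eventually.of_forall fun z => ?_)
    ((integrable_heatKernel (d := d) one_pos 0).mul_const C) (Eventually.of_forall fun z => ?_)
  · exact (continuous_gauss.mul (by fun_prop)).aestronglyMeasurable
  · rw [norm_mul, Real.norm_of_nonneg (heatKernel_nonneg one_pos _ _)]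
    exact mul_le_mul_of_nonneg_left (hC _) (heatKernel_nonneg one_pos _ _)
  · have := Real.continuous_sqrt
    fun_prop

lemma A_nonneg (hf : ∀ x, 0 ≤ f x) (x : Sp d) (s : ℝ) : 0 ≤ A d f x s :=
  integral_nonneg fun _ => mul_nonneg (heatKernel_nonneg one_pos _ _) (hf _)

lemma A_zero (x : Sp d) : A d f x 0 = f x := by
  simp [A, integral_mul_const, integral_heatKernel]

/-- The Gaussian average agrees with the integral against the heat kernel (substitute
`y = x + √s z`). -/
lemma A_eq {s : ℝ} (hs : 0 < s) (x : Sp d) : A d f x s = ∫ y, heatKernel d s x y * f y := by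
  have h1 := Measure.integral_comp_smul volume
    (fun w : Sp d => heatKernel d s x (x + w) * f (x + w)) (√s)
  rw [finrank_euclideanSpace_fin,
    integral_add_left_eq_self (fun y => heatKernel d s x y * f y) x] at h1
  have hs' : 0 < √s := Real.sqrt_pos.2 hs
  have h2 : ∀ z, heatKernel d s x (x + √s • z) = (√s ^ d)⁻¹ * heatKernel d 1 0 z := by
    intro z
    unfold heatKernel
    have e1 : (√s ^ d)⁻¹ = s ^ (-(d : ℝ) / 2) := by
      rw [Real.sqrt_eq_rpow, ← Real.rpow_natCast, ← Real.rpow_mul hs.le, ← Real.rpow_neg hs.le]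
      congr 1; ring
    rw [e1, ← mul_assoc, ← Real.mul_rpow (by positivity) (by positivity)]
    congr 2
    · ring
    · rw [sub_add_cancel_left, norm_neg, norm_smul, mul_pow, Real.norm_of_nonneg hs'.le,
        Real.sq_sqrt hs.le, zero_sub, norm_neg]
      field_simp
  simp_rw [h2, mul_assoc] at h1
  rw [integral_const_mul, abs_of_pos (by positivity), smul_eq_mul] at h1
  exact mul_left_cancel₀ (by positivity) h1

lemma P_ofReal (hf : Continuous f) (hC : ∀ x, |f x| ≤ C) (h0 : ∀ x, 0 ≤ f x) {s : ℝ} (hs : 0 < s)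
    (x : Sp d) : P d s (fun y => ENNReal.ofReal (f y)) x = ENNReal.ofReal (A d f x s) := by
  unfold P K
  rw [A_eq hs, ofReal_integral_eq_lintegral_ofReal]
  · simp_rw [fun y => ENNReal.ofReal_mul (q := f y) (heatKernel_nonneg hs x y)]
  · refine ((integrable_heatKernel hs x).mul_const C).mono' ?_ (Eventually.of_forall fun _ => ?_)
    · apply Continuous.aestronglyMeasurable
      unfold heatKernel
      fun_prop
    · rw [norm_mul, Real.norm_of_nonneg (heatKernel_nonneg hs _ _)]
      exact mul_le_mul_of_nonneg_left (hC _) (heatKernel_nonneg hs _ _)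
  · exact Eventually.of_forall fun y => mul_nonneg (heatKernel_nonneg hs _ _) (h0 _)

end

/-- The directional derivative of `g` along the `i`-th coordinate vector. -/
noncomputable def pd (i : Fin d) (g : Sp d → ℝ) (x : Sp d) : ℝ :=
  fderiv ℝ g x (EuclideanSpace.single i 1)

/-- The Laplacian, as the sum of the second coordinate derivatives. -/
noncomputable def lap (g : Sp d → ℝ) (x : Sp d) : ℝ := ∑ i, pd i (pd i g) x

lemma contDiff_pd {g : Sp d → ℝ} (hg : ContDiff ℝ ((⊤ : ℕ∞) : WithTop ℕ∞) g) (i : Fin d) :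
    ContDiff ℝ ((⊤ : ℕ∞) : WithTop ℕ∞) (pd i g) := by
  unfold pd
  exact (hg.fderiv_right (m := ((⊤ : ℕ∞) : WithTop ℕ∞)) (by simp)).clm_apply contDiff_const

lemma hasCompactSupport_pd {g : Sp d → ℝ} (hg : HasCompactSupport g) (i : Fin d) :
    HasCompactSupport (pd i g) := by
  refine (hg.fderiv ℝ).mono fun x hx => ?_
  rw [Function.mem_support] at hx ⊢
  intro h
  exact hx (by simp [pd, h])

lemma exists_bound {g : Sp d → ℝ} (hg : Continuous g) (hc : HasCompactSupport g) :
    ∃ C, 0 ≤ C ∧ ∀ x, |g x| ≤ C := by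
  obtain ⟨C, hC⟩ := hc.exists_bound_of_continuous hg
  exact ⟨max C 0, le_max_right _ _, fun x => (hC x).trans (le_max_left _ _)⟩

section
variable {g : Sp d → ℝ}

lemma continuous_lap (hg : ContDiff ℝ ((⊤ : ℕ∞) : WithTop ℕ∞) g) : Continuous (lap g) := by
  unfold lap
  exact continuous_finsetSum _ fun i _ => (contDiff_pd (contDiff_pd hg i) i).continuous

/-- Gaussian integration by parts in one coordinate. -/
lemma gauss_ibp (hg : ContDiff ℝ ((⊤ : ℕ∞) : WithTop ℕ∞) g) (hc : HasCompactSupport g)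
    (x : Sp d) {r : ℝ} (hr : 0 < r) (i : Fin d) :
    ∫ z, heatKernel d 1 0 z * (z i * g (x + r • z)) =
      r * ∫ z, heatKernel d 1 0 z * pd i g (x + r • z) := by
  have hda : ∀ z, HasFDerivAt (fun z : Sp d => x + r • z) (r • ContinuousLinearMap.id ℝ (Sp d)) z :=
    fun z => ((hasFDerivAt_id z).const_smul r).const_add x
  have hgd : ∀ z, HasFDerivAt (fun z => g (x + r • z))
      ((fderiv ℝ g (x + r • z)).comp (r • ContinuousLinearMap.id ℝ (Sp d))) z := fun z =>
    ((hg.differentiable (by simp)).differentiableAt.hasFDerivAt).comp z (hda z)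
  have hcomp : ∀ {k : Sp d → ℝ}, HasCompactSupport k → HasCompactSupport fun z => k (x + r • z) := by
    intro k hk
    exact hk.comp_homeomorph ((Homeomorph.smulOfNeZero r hr.ne').trans (Homeomorph.addLeft x))
  have e1 : ∀ z, fderiv ℝ (fun z => g (x + r • z)) z (EuclideanSpace.single i 1) =
      r * pd i g (x + r • z) := by
    intro z; rw [(hgd z).fderiv]; simp [pd]
  have e2 : ∀ z : Sp d, fderiv ℝ (heatKernel d 1 0) z (EuclideanSpace.single i 1) =
      -(heatKernel d 1 0 z * z i) := by
    intro z; rw [(hasFDerivAt_gauss z).fderiv]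
    simp [EuclideanSpace.inner_single_right]
  have hgc := hg.continuous
  have hpc := (contDiff_pd hg i).continuous
  have hgauss := continuous_gauss (d := d)
  have h := integral_mul_fderiv_eq_neg_fderiv_mul_of_integrable (μ := volume)
    (f := heatKernel d 1 0) (g := fun z => g (x + r • z))
    (v := (EuclideanSpace.single i 1 : Sp d)) ?_ ?_ ?_ ?_ ?_
  · simp_rw [e1, e2] at h
    rw [← integral_const_mul]
    rw [← integral_neg] at h
    refine Eq.trans (integral_congr_ae (Eventually.of_forall fun z => ?_)) (h.symm.trans
      (integral_congr_ae (Eventually.of_forall fun z => ?_)))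
    · ring
    · ring
  · simp_rw [e2]
    refine Continuous.integrable_of_hasCompactSupport (by fun_prop) ?_
    exact (hcomp hc).mul_left
  · simp_rw [e1]
    refine Continuous.integrable_of_hasCompactSupport (by fun_prop) ?_
    exact ((hcomp (hasCompactSupport_pd hc i)).mul_left).mul_left
  · refine Continuous.integrable_of_hasCompactSupport (by fun_prop) ?_
    exact (hcomp hc).mul_left
  · exact fun z _ => (hasFDerivAt_gauss z).differentiableAt
  · exact fun z _ => (hgd z).differentiableAt

/-- The derivative in `r = √s` of a Gaussian average; the factor `r` cancels against that of
`d√s/ds = 1 / (2 √s)`, which leaves the generator `Δ / 2`. -/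
lemma hasDerivAt_gauss_avg (hg : ContDiff ℝ ((⊤ : ℕ∞) : WithTop ℕ∞) g) (hc : HasCompactSupport g)
    (x : Sp d) {r : ℝ} (hr : 0 < r) :
    HasDerivAt (fun r : ℝ => ∫ z, heatKernel d 1 0 z * g (x + r • z))
      (r * ∫ z, heatKernel d 1 0 z * lap g (x + r • z)) r := by
  obtain ⟨C, hC0, hC⟩ := exists_bound hg.continuous hc
  obtain ⟨C', hC'⟩ := (hc.fderiv ℝ).exists_bound_of_continuous (hg.continuous_fderiv (by simp))
  have hgc := hg.continuous
  have hfc := hg.continuous_fderiv (by simp)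
  have hgauss := continuous_gauss (d := d)
  have h := hasDerivAt_integral_of_dominated_loc_of_deriv_le (μ := volume) (x₀ := r) (s := univ)
    (F := fun r z => heatKernel d 1 0 z * g (x + r • z))
    (F' := fun r z => heatKernel d 1 0 z * fderiv ℝ g (x + r • z) z)
    (bound := fun z => (heatKernel d 1 0 z * ‖z‖) * C') Filter.univ_mem
    (Eventually.of_forall fun r => Continuous.aestronglyMeasurable (by fun_prop))
    (integrable_A hgc hC x r) (Continuous.aestronglyMeasurable (by fun_prop))
    (Eventually.of_forall fun z r _ => ?_) (integrable_norm_mul_gauss.mul_const C')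
    (Eventually.of_forall fun z r _ => ?_)
  · refine h.2.congr_deriv ?_
    have e1 : ∀ z, heatKernel d 1 0 z * fderiv ℝ g (x + r • z) z =
        ∑ i, heatKernel d 1 0 z * (z i * pd i g (x + r • z)) := by
      intro z
      rw [← Finset.mul_sum]
      congr 1
      have h3 : z = ∑ i, z i • (EuclideanSpace.single i 1 : Sp d) := by
        ext j; simp [Finset.sum_apply, Pi.single_apply]
      have h4 : ∀ L : Sp d →L[ℝ] ℝ, L z = ∑ i, z i * L (EuclideanSpace.single i 1) := by
        intro L
        conv_lhs => rw [h3, map_sum]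
        exact Finset.sum_congr rfl fun i _ => by rw [map_smul, smul_eq_mul]
      exact h4 _
    rw [integral_congr_ae (Eventually.of_forall e1)]
    have hcomp : ∀ {k : Sp d → ℝ}, HasCompactSupport k →
        HasCompactSupport fun z => k (x + r • z) := by
      intro k hk
      exact hk.comp_homeomorph ((Homeomorph.smulOfNeZero r hr.ne').trans (Homeomorph.addLeft x))
    rw [integral_finsetSum]
    · unfold lap
      simp_rw [Finset.mul_sum]
      rw [integral_finsetSum, Finset.mul_sum]
      · refine Finset.sum_congr rfl fun i _ => ?_
        rw [gauss_ibp (contDiff_pd hg i) (hasCompactSupport_pd hc i) x hr i]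
      · intro i _
        have hpc := (contDiff_pd (contDiff_pd hg i) i).continuous
        refine Continuous.integrable_of_hasCompactSupport (by fun_prop) ?_
        exact (hcomp (hasCompactSupport_pd (hasCompactSupport_pd hc i) i)).mul_left
    · intro i _
      have hpc := (contDiff_pd hg i).continuous
      refine Continuous.integrable_of_hasCompactSupport (by fun_prop) ?_
      exact ((hcomp (hasCompactSupport_pd hc i)).mul_left).mul_left
  · rw [norm_mul, Real.norm_of_nonneg (heatKernel_nonneg one_pos _ _), mul_assoc, mul_comm ‖z‖]
    refine mul_le_mul_of_nonneg_left ?_ (heatKernel_nonneg one_pos _ _)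
    exact (ContinuousLinearMap.le_opNorm _ _).trans
      (mul_le_mul_of_nonneg_right (hC' _) (norm_nonneg _))
  · have h1 : HasDerivAt (fun r : ℝ => x + r • z) z r := by
      simpa using ((hasDerivAt_id r).smul_const z).const_add x
    have h2 := ((hg.differentiable (by simp)).differentiableAt (x := x + r • z)).hasFDerivAt
    exact (h2.comp_hasDerivAt r h1).const_mul _

/-- The heat semigroup solves the heat equation, in integrated form. -/
lemma A_sub_eq (hg : ContDiff ℝ ((⊤ : ℕ∞) : WithTop ℕ∞) g) (hc : HasCompactSupport g)
    {C : ℝ} (hC : ∀ x, |lap g x| ≤ C) (x : Sp d) {t : ℝ} (ht : 0 ≤ t) :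
    A d g x t - g x = ∫ s in (0 : ℝ)..t, A d (fun y => lap g y / 2) x s := by
  obtain ⟨B, hB0, hB⟩ := exists_bound hg.continuous hc
  have hC2 : ∀ x, |lap g x / 2| ≤ C := fun x => by
    rw [abs_div, abs_two]
    linarith [hC x, abs_nonneg (lap g x)]
  rw [intervalIntegral.integral_eq_sub_of_hasDerivAt_of_le ht
    (continuous_A hg.continuous hB x).continuousOn (f := A d g x), A_zero]
  · intro s hs
    have hs' : 0 < √s := Real.sqrt_pos.2 hs.1
    have h := (hasDerivAt_gauss_avg hg hc x hs').comp s (Real.hasDerivAt_sqrt hs.1.ne')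
    refine h.congr_deriv ?_
    unfold A
    simp_rw [mul_div_assoc']
    rw [integral_div]
    field_simp
  · exact (continuous_A ((continuous_lap hg).div_const 2) hC2 x).intervalIntegrable _ _

end

lemma lintegral_P_ofReal {f : Sp d → ℝ} {C : ℝ} (hf : Continuous f) (hC : ∀ x, |f x| ≤ C)
    (h0 : ∀ x, 0 ≤ f x) (x : Sp d) {q t : ℝ} (hqt : q < t) :
    ∫⁻ r in Ioo q t, P d (r - q) (fun y => ENNReal.ofReal (f y)) x =
      ENNReal.ofReal (∫ s in (0 : ℝ)..(t - q), A d f x s) := by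
  have hcont : Continuous fun r => A d f x (r - q) :=
    (continuous_A hf hC x).comp (continuous_id.sub continuous_const)
  have h1 : ∫ s in (0 : ℝ)..(t - q), A d f x s = ∫ r in q..t, A d f x (r - q) := by
    rw [intervalIntegral.integral_comp_sub_right (fun s => A d f x s), sub_self]
  rw [h1, intervalIntegral.integral_of_le hqt.le, integral_Ioc_eq_integral_Ioo,
    ofReal_integral_eq_lintegral_ofReal
      ((hcont.integrableOn_Icc (a := q) (b := t)).mono_set Ioo_subset_Icc_self)
      (Eventually.of_forall fun r => A_nonneg h0 _ _)]
  exact setLIntegral_congr_fun measurableSet_Ioo fun r hr => P_ofReal hf hC h0 (sub_pos.2 hr.1) x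

lemma ofReal_max_zero (a : ℝ) : ENNReal.ofReal (max a 0) = ENNReal.ofReal a := by
  rcases le_total a 0 with h | h
  · rw [max_eq_right h, ENNReal.ofReal_of_nonpos h, ENNReal.ofReal_zero]
  · rw [max_eq_left h]

/-- The heat equation in integrated form for the test function `1 - g`, whose Laplacian is split
into positive and negative parts so that every term lives in `[0,∞]`. -/
lemma heat_formula {g : Sp d → ℝ} (hg : ContDiff ℝ ((⊤ : ℕ∞) : WithTop ℕ∞) g)
    (hc : HasCompactSupport g) {C : ℝ} (hC : ∀ x, |lap g x| ≤ C) (hg1 : ∀ x, 0 ≤ 1 - g x)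
    (x : Sp d) {q t : ℝ} (hqt : q < t) :
    P d (t - q) (fun y => ENNReal.ofReal (1 - g y)) x +
        ∫⁻ r in Ioo q t, P d (r - q) (fun y => ENNReal.ofReal (lap g y / 2)) x =
      ENNReal.ofReal (1 - g x) +
        ∫⁻ r in Ioo q t, P d (r - q) (fun y => ENNReal.ofReal (-(lap g y / 2))) x := by
  obtain ⟨B, hB0, hB⟩ := exists_bound hg.continuous hc
  have hl := continuous_lap hg
  have hC2 : ∀ x, |lap g x / 2| ≤ C := fun x => by
    rw [abs_div, abs_two]
    linarith [hC x, abs_nonneg (lap g x)]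
  have hC0 : 0 ≤ C := (abs_nonneg _).trans (hC x)
  have hp : Continuous fun y => max (lap g y / 2) 0 := by fun_prop
  have hm : Continuous fun y => max (-(lap g y / 2)) 0 := by fun_prop
  have hpC : ∀ y, |max (lap g y / 2) 0| ≤ C := fun y => by
    rw [abs_of_nonneg (le_max_right _ _)]
    exact max_le ((le_abs_self _).trans (hC2 y)) hC0
  have hmC : ∀ y, |max (-(lap g y / 2)) 0| ≤ C := fun y => by
    rw [abs_of_nonneg (le_max_right _ _)]
    exact max_le ((neg_le_abs _).trans (hC2 y)) hC0
  have e1 := lintegral_P_ofReal hp hpC (fun y => le_max_right _ _) x hqt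
  have e2 := lintegral_P_ofReal hm hmC (fun y => le_max_right _ _) x hqt
  simp only [ofReal_max_zero] at e1 e2
  have hgb : ∀ y, |1 - g y| ≤ 1 + B := fun y => by
    refine (abs_sub _ _).trans ?_
    rw [abs_one]; linarith [hB y]
  have hg1c : Continuous fun y => 1 - g y := by have := hg.continuous; fun_prop
  have hn : ∀ {f : Sp d → ℝ}, (∀ y, 0 ≤ f y) → 0 ≤ ∫ s in (0 : ℝ)..(t - q), A d f x s :=
    fun hf => intervalIntegral.integral_nonneg (sub_pos.2 hqt).le fun s _ => A_nonneg hf _ _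
  rw [e1, e2, P_ofReal hg1c hgb hg1 (sub_pos.2 hqt),
    ← ENNReal.ofReal_add (A_nonneg hg1 _ _) (hn fun y => le_max_right _ _),
    ← ENNReal.ofReal_add (hg1 _) (hn fun y => le_max_right _ _)]
  congr 1
  have h1 : A d (fun y => 1 - g y) x (t - q) = 1 - A d g x (t - q) := by
    unfold A
    simp_rw [mul_sub, mul_one]
    rw [integral_sub (integrable_heatKernel one_pos 0) (integrable_A hg.continuous hB x _),
      integral_heatKernel one_pos]
  have h2 := A_sub_eq hg hc hC x (sub_pos.2 hqt).le
  have h3 : ∀ s, A d (fun y => lap g y / 2) x s =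
      A d (fun y => max (lap g y / 2) 0) x s - A d (fun y => max (-(lap g y / 2)) 0) x s := by
    intro s
    unfold A
    rw [← integral_sub (integrable_A hp hpC x _) (integrable_A hm hmC x _)]
    congr 1; ext z
    rw [← mul_sub]
    congr 1
    rcases le_total (lap g (x + √s • z) / 2) 0 with h | h
    · rw [max_eq_right h, max_eq_left (by linarith)]; ring
    · rw [max_eq_left h, max_eq_right (by linarith)]; ring
  simp_rw [h3] at h2
  rw [intervalIntegral.integral_sub ((continuous_A hp hpC x).intervalIntegrable _ _)
    ((continuous_A hm hmC x).intervalIntegrable _ _)] at h2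
  rw [h1]
  linarith

/-! ### The cut-off function -/

lemma pd_eq_zero {f : Sp d → ℝ} {x : Sp d} (hx : x ∉ tsupport f) (i : Fin d) : pd i f x = 0 := by
  simp [pd, fderiv_of_notMem_tsupport (𝕜 := ℝ) hx]

lemma tsupport_pd_subset (f : Sp d → ℝ) (i : Fin d) : tsupport (pd i f) ⊆ tsupport f := by
  refine closure_minimal (fun x hx => ?_) (isClosed_tsupport f)
  by_contra h
  exact hx (pd_eq_zero h i)

lemma lap_eq_zero {f : Sp d → ℝ} {x : Sp d} (hx : x ∉ tsupport f) : lap f x = 0 :=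
  Finset.sum_eq_zero fun i _ => pd_eq_zero (fun h => hx (tsupport_pd_subset f i h)) i

/-- A cut-off `g` equal to `1` on the unit ball and to `0` off the ball of radius `2`, such that
`ψ = 1 - g` satisfies `(Δψ / 2)² ≤ C ψ`. It is `ψ = (1 - b)⁴` for a smooth bump `b`: two
derivatives of a fourth power leave a factor `(1 - b)² = √ψ`. -/
lemma exists_cutoff (d : ℕ) : ∃ (g : Sp d → ℝ) (C : ℝ),
    ContDiff ℝ ((⊤ : ℕ∞) : WithTop ℕ∞) g ∧ HasCompactSupport g ∧ 0 ≤ C ∧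
    (∀ x, 0 ≤ 1 - g x) ∧ (∀ x, 0 ≤ g x) ∧ (∀ x ∈ ball (0 : Sp d) 1, g x = 1) ∧
    (∀ x, x ∉ closedBall (0 : Sp d) 2 → g x = 0) ∧
    (∀ x, |lap g x| ≤ C) ∧ (∀ x, (lap g x / 2) ^ 2 ≤ C * (1 - g x)) ∧
    (∀ x, x ∉ closedBall (0 : Sp d) 2 → lap g x = 0) := by
  let b : ContDiffBump (0 : Sp d) := ⟨1, 2, one_pos, one_lt_two⟩
  have hb : ContDiff ℝ ((⊤ : ℕ∞) : WithTop ℕ∞) b := b.contDiff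
  have hbt : tsupport b = closedBall (0 : Sp d) 2 := b.tsupport_eq
  have hb0 : ∀ x, 0 ≤ b x := fun x => b.nonneg
  have hb1 : ∀ x, b x ≤ 1 := fun x => b.le_one
  let g : Sp d → ℝ := fun x => 1 - (1 - b x) ^ 4
  have hg : ContDiff ℝ ((⊤ : ℕ∞) : WithTop ℕ∞) g :=
    contDiff_const.sub ((contDiff_const.sub hb).pow 4)
  have hg0 : ∀ x, x ∉ closedBall (0 : Sp d) 2 → g x = 0 := by
    intro x hx
    have : b x = 0 := image_eq_zero_of_notMem_tsupport (hbt ▸ hx)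
    simp [g, this]
  have hgc : HasCompactSupport g := HasCompactSupport.intro (isCompact_closedBall 0 2) hg0
  have hgt : tsupport g ⊆ closedBall 0 2 := by
    refine closure_minimal (fun x hx => ?_) isClosed_closedBall
    by_contra h
    exact hx (hg0 x h)
  have hlap0 : ∀ x, x ∉ closedBall (0 : Sp d) 2 → lap g x = 0 := fun x hx =>
    lap_eq_zero fun h => hx (hgt h)
  have hbd : ∀ x, HasFDerivAt b (fderiv ℝ b x) x := fun x =>
    (hb.differentiable (by simp)).differentiableAt.hasFDerivAt
  have hpd : ∀ i, pd i g = fun x => 4 * (1 - b x) ^ 3 * pd i b x := by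
    intro i
    ext x
    have h := (((hbd x).const_sub 1).pow 4).const_sub 1
    unfold pd
    rw [h.fderiv]
    simp
  have hppd : ∀ i x, pd i (pd i g) x =
      (1 - b x) ^ 2 * (-12 * pd i b x ^ 2 + 4 * (1 - b x) * pd i (pd i b) x) := by
    intro i x
    rw [hpd i]
    have h1 : HasFDerivAt (pd i b) (fderiv ℝ (pd i b) x) x :=
      ((contDiff_pd hb i).differentiable (by simp)).differentiableAt.hasFDerivAt
    have h := ((((hbd x).const_sub 1).pow 3).const_mul 4).mul h1
    have e : pd i (fun x => 4 * (1 - b x) ^ 3 * pd i b x) x =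
        fderiv ℝ ((fun y => 4 * (1 - b y) ^ 3) * pd i b) x (EuclideanSpace.single i 1) := rfl
    rw [e, h.fderiv]
    simp [pd]
    ring
  let S : Sp d → ℝ := fun x => ∑ i, (-12 * pd i b x ^ 2 + 4 * (1 - b x) * pd i (pd i b) x)
  have hlap : ∀ x, lap g x = (1 - b x) ^ 2 * S x := by
    intro x
    simp only [lap, S, Finset.mul_sum, hppd]
  have hSc : Continuous S := by
    refine continuous_finsetSum _ fun i _ => ?_
    have h1 := (contDiff_pd hb i).continuous
    have h2 := (contDiff_pd (contDiff_pd hb i) i).continuous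
    have h3 := hb.continuous
    fun_prop
  have hSs : HasCompactSupport S := by
    refine HasCompactSupport.intro (isCompact_closedBall 0 2) fun x hx => ?_
    refine Finset.sum_eq_zero fun i _ => ?_
    rw [← hbt] at hx
    rw [pd_eq_zero hx, pd_eq_zero fun h => hx (tsupport_pd_subset _ i h)]
    ring
  obtain ⟨D, hD0, hD⟩ := exists_bound hSc hSs
  have hsq : ∀ x, (1 - b x) ^ 2 ≤ 1 := fun x =>
    pow_le_one₀ (by linarith [hb1 x]) (by linarith [hb0 x])
  refine ⟨g, D + D ^ 2, hg, hgc, by positivity, fun x => ?_, fun x => ?_, fun x hx => ?_, hg0,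
    fun x => ?_, fun x => ?_, hlap0⟩
  · simp only [g, sub_sub_cancel]; positivity
  · have : (1 - b x) ^ 4 ≤ 1 := pow_le_one₀ (by linarith [hb1 x]) (by linarith [hb0 x])
    simp only [g]; linarith
  · have : b x = 1 := b.one_of_mem_closedBall (ball_subset_closedBall hx)
    simp [g, this]
  · rw [hlap, abs_mul, abs_of_nonneg (sq_nonneg _)]
    nlinarith [hsq x, hD x, abs_nonneg (S x), sq_nonneg D]
  · rw [hlap]
    have h1 : S x ^ 2 ≤ D ^ 2 := sq_le_sq' (abs_le.1 (hD x)).1 (abs_le.1 (hD x)).2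
    have h2 : 0 ≤ (1 - b x) ^ 4 := by positivity
    have h3 : g x = 1 - (1 - b x) ^ 4 := rfl
    rw [h3]
    nlinarith [mul_le_mul_of_nonneg_left h1 h2, mul_nonneg hD0 h2, mul_nonneg h2 (sq_nonneg (S x))]

/-! ### Mass far from the support of the initial data -/

section
variable {φ : Sp d → ℝ≥0∞} {U : ℝ → Sp d → ℝ≥0∞}

/-- The tested equation integrated over the time interval `(0, t)`. -/
lemma Mild.test_integrated (h : Mild d φ U) (hφ : Measurable φ) {f : Sp d → ℝ≥0∞}
    (hf : Measurable f) (t : ℝ) :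
    (∫⁻ r in Ioo 0 t, ∫⁻ x, U r x * f x) +
        ∫⁻ q in Ioo 0 t, ∫⁻ x, U q x ^ 2 * ∫⁻ r in Ioo q t, P d (r - q) f x =
      ∫⁻ x, φ x * ∫⁻ r in Ioo 0 t, P d (r - 0) f x := by
  have hf' : Measurable (Function.uncurry fun (_ : ℝ × Sp d) y => f y) := hf.comp measurable_snd
  have e0 : ∫⁻ r in Ioo 0 t, ∫⁻ x, φ x * P d (r - 0) f x =
      ∫⁻ x, φ x * ∫⁻ r in Ioo 0 t, P d (r - 0) f x := by
    rw [lintegral_lintegral_swap]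
    · congr 1; ext x
      rw [lintegral_const_mul]
      exact measurable_P (f := fun _ => f) (by fun_prop) measurable_const (hf.comp measurable_snd)
    · apply Measurable.aemeasurable
      exact (hφ.comp measurable_snd).mul (measurable_P (f := fun _ => f)
        (measurable_fst.sub_const 0) measurable_snd (hf.comp measurable_snd))
  have e1 : ∫⁻ q in Ioo 0 t, ∫⁻ x, U q x ^ 2 * ∫⁻ r in Ioo q t, P d (r - q) f x =
      ∫⁻ r in Ioo 0 t, ∫⁻ q in Ioo 0 r, ∫⁻ x, U q x ^ 2 * P d (r - q) f x := by
    rw [lintegral_triangle (h := fun r q => ∫⁻ x, U q x ^ 2 * P d (r - q) f x)]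
    · congr 1; ext q
      rw [lintegral_lintegral_swap]
      · congr 1; ext x
        rw [lintegral_const_mul]
        exact measurable_P (f := fun _ => f) (by fun_prop) measurable_const
          (hf.comp measurable_snd)
      · apply Measurable.aemeasurable
        exact ((h.meas measurable_const measurable_snd).pow_const 2).mul
          (measurable_P (f := fun _ => f) (measurable_fst.sub_const q) measurable_snd
            (hf.comp measurable_snd))
    · apply Measurable.lintegral_prod_right
        (f := fun (p : ℝ × ℝ) x => U p.2 x ^ 2 * P d (p.1 - p.2) f x)
      exact ((h.meas (measurable_snd.comp measurable_fst) measurable_snd).pow_const 2).mul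
        (measurable_P (f := fun _ => f) (by fun_prop) measurable_snd (hf.comp measurable_snd))
  have hm : Measurable fun r => ∫⁻ x, U r x * f x :=
    Measurable.lintegral_prod_right (f := fun r x => U r x * f x)
      ((h.meas measurable_fst measurable_snd).mul (hf.comp measurable_snd))
  rw [e1, ← e0, ← lintegral_add_left hm]
  refine setLIntegral_congr_fun measurableSet_Ioo fun r hr => ?_
  simp only [sub_zero]
  exact h.test hφ hf hr.1

/-- Young's inequality in the form used to absorb `U Δψ` into `U² ψ`. -/
lemma mul_le_of_sq_le {a k p C : ℝ≥0∞} (hC0 : C ≠ 0) (hC : C ≠ ∞) (hk : k ^ 2 ≤ C * p) :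
    a * k ≤ a ^ 2 * p + C := by
  rcases le_total (a * k) C with h | h
  · exact h.trans le_add_self
  · refine le_trans ?_ le_self_add
    rw [← ENNReal.mul_le_mul_iff_right hC0 hC]
    calc C * (a * k) ≤ (a * k) * (a * k) := by gcongr
      _ = a ^ 2 * k ^ 2 := by ring
      _ ≤ a ^ 2 * (C * p) := by gcongr
      _ = C * (a ^ 2 * p) := by ring

/-- Whatever the size of initial data supported in the unit ball, the mass outside the ball of
radius `2` is bounded up to time `1` by a constant depending on the dimension only. -/
lemma exists_outside_bound (d : ℕ) : ∃ C₁ : ℝ≥0∞, C₁ ≠ ∞ ∧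
    ∀ (φ : Sp d → ℝ≥0∞) (U : ℝ → Sp d → ℝ≥0∞), Mild d φ U → Measurable φ → ∫⁻ x, φ x ≠ ∞ →
      (∀ x, x ∉ ball (0 : Sp d) 1 → φ x = 0) → ∀ t, 0 < t → t ≤ 1 →
        ∫⁻ x in (closedBall 0 2)ᶜ, U t x ≤ C₁ := by
  obtain ⟨g, C, hg, hgc, hC0, hg1, hg0, hgB, hgE, hlC, hsq, hlE⟩ := exists_cutoff d
  have hCt : (ENNReal.ofReal (C + 1)) ≠ ∞ := ENNReal.ofReal_ne_top
  refine ⟨ENNReal.ofReal (C + 1) * volume (closedBall (0 : Sp d) 2),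
    ENNReal.mul_ne_top hCt (measure_closedBall_lt_top).ne, ?_⟩
  intro φ U h hφ hφi hφB t ht ht1
  set ψ : Sp d → ℝ≥0∞ := fun x => ENNReal.ofReal (1 - g x) with hψ
  set G : Sp d → ℝ≥0∞ := fun x => ENNReal.ofReal (lap g x / 2) with hG
  set H : Sp d → ℝ≥0∞ := fun x => ENNReal.ofReal (-(lap g x / 2)) with hH
  have hlm : Measurable (lap g) := (continuous_lap hg).measurable
  have hgm : Measurable g := hg.continuous.measurable
  have hψm : Measurable ψ := by fun_prop
  have hGm : Measurable G := by fun_prop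
  have hHm : Measurable H := by fun_prop
  have hψ1 : ∀ x, ψ x ≤ 1 := fun x => by
    rw [hψ, ← ENNReal.ofReal_one]
    exact ENNReal.ofReal_le_ofReal (by linarith [hg0 x])
  have heat : ∀ x q, q < t → P d (t - q) ψ x + ∫⁻ r in Ioo q t, P d (r - q) G x =
      ψ x + ∫⁻ r in Ioo q t, P d (r - q) H x := fun x q hq => heat_formula hg hgc hlC hg1 x hq
  have hHC : ∀ x, H x ≤ ENNReal.ofReal C := fun x =>
    ENNReal.ofReal_le_ofReal (by
      have := (abs_le.1 (hlC x)).1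
      linarith)
  have t1 := h.test hφ hψm ht
  have t2 := h.test_integrated hφ hGm t
  have t3 := h.test_integrated hφ hHm t
  have hsqm : ∫⁻ q in Ioo 0 t, ∫⁻ x, U q x ^ 2 ≠ ∞ := by
    refine ne_top_of_le_ne_top hφi ?_
    rw [← h.mass hφ ht]; exact le_add_self
  have hUm : Measurable (Function.uncurry fun q x => U q x ^ 2) := h.1.pow_const 2
  have hPm : ∀ {f : Sp d → ℝ≥0∞}, Measurable f →
      Measurable fun p : ℝ × Sp d => P d (t - p.1) f p.2 := fun hf =>
    measurable_P (f := fun _ => _) (by fun_prop) measurable_snd (hf.comp measurable_snd)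
  have hqm : ∀ q {f : Sp d → ℝ≥0∞}, Measurable f → Measurable fun x => U q x ^ 2 * f x :=
    fun q f hf => ((h.meas measurable_const measurable_id).pow_const 2).mul hf
  have hUsm : ∀ q, Measurable fun x => U q x ^ 2 := fun q =>
    (h.meas measurable_const measurable_id).pow_const 2
  have hPψm : ∀ s, Measurable fun x => P d s ψ x := fun s =>
    measurable_P (f := fun _ => ψ) measurable_const measurable_id (hψm.comp measurable_snd)
  have hφP : Measurable fun x => φ x * P d t ψ x := hφ.mul (hPψm t)
  have hQm : Measurable fun q => ∫⁻ x, U q x ^ 2 * ψ x :=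
    Measurable.lintegral_prod_right (f := fun q x => U q x ^ 2 * ψ x)
      (hUm.mul (hψm.comp measurable_snd))
  have hPqm : Measurable fun q => ∫⁻ x, U q x ^ 2 * P d (t - q) ψ x :=
    Measurable.lintegral_prod_right (f := fun q x => U q x ^ 2 * P d (t - q) ψ x)
      (hUm.mul (hPm hψm))
  set Z := ∫⁻ q in Ioo 0 t, ∫⁻ x, U q x ^ 2 * ∫⁻ r in Ioo q t, P d (r - q) H x with hZ
  set Q := ∫⁻ q in Ioo 0 t, ∫⁻ x, U q x ^ 2 * ψ x with hQ
  have hZ_top : Z ≠ ∞ := by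
    refine ne_top_of_le_ne_top
      (ENNReal.mul_ne_top hsqm (ENNReal.mul_ne_top (ENNReal.ofReal_ne_top (r := C))
        (ENNReal.ofReal_ne_top (r := t)))) ?_
    rw [← lintegral_mul_const _ h.meas_sq]
    refine setLIntegral_mono' measurableSet_Ioo fun q hq => ?_
    rw [← lintegral_mul_const _ (hUsm q)]
    refine lintegral_mono fun x => mul_le_mul_right ?_ _
    calc ∫⁻ r in Ioo q t, P d (r - q) H x ≤ ∫⁻ r in Ioo q t, ENNReal.ofReal C :=
          setLIntegral_mono' measurableSet_Ioo fun r hr => P_le_const (sub_pos.2 hr.1) hHC x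
      _ = ENNReal.ofReal C * ENNReal.ofReal (t - q) := by
          rw [setLIntegral_const, Real.volume_Ioo]
      _ ≤ _ := mul_le_mul_right (ENNReal.ofReal_le_ofReal (by linarith [hq.1])) _
  have hQ_top : Q ≠ ∞ := by
    refine ne_top_of_le_ne_top hsqm (lintegral_mono fun q => lintegral_mono fun x => ?_)
    exact mul_le_of_le_one_right' (hψ1 x)
  -- The time-dependent tests combine through the heat equation for `ψ`.
  have c1 : (∫⁻ q in Ioo 0 t, ∫⁻ x, U q x ^ 2 * P d (t - q) ψ x) +
      (∫⁻ q in Ioo 0 t, ∫⁻ x, U q x ^ 2 * ∫⁻ r in Ioo q t, P d (r - q) G x) = Q + Z := by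
    rw [hQ, hZ, ← lintegral_add_left hPqm, ← lintegral_add_left hQm]
    refine setLIntegral_congr_fun measurableSet_Ioo fun q hq => ?_
    rw [← lintegral_add_left (hqm q (hPψm _)), ← lintegral_add_left (hqm q hψm)]
    congr 1; ext x
    rw [← mul_add, ← mul_add, heat x q hq.2]
  have c2 : (∫⁻ x, φ x * P d t ψ x) + (∫⁻ x, φ x * ∫⁻ r in Ioo 0 t, P d (r - 0) G x) =
      ∫⁻ x, φ x * ∫⁻ r in Ioo 0 t, P d (r - 0) H x := by
    rw [← lintegral_add_left hφP]
    congr 1; ext x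
    have := heat x 0 ht
    rw [sub_zero] at this
    rw [← mul_add, this, mul_add]
    have h0 : φ x * ψ x = 0 := by
      by_cases hx : x ∈ ball (0 : Sp d) 1
      · simp [hψ, hgB x hx]
      · simp [hφB x hx]
    rw [h0, zero_add]
  -- The weak form of the equation with test function `ψ`; the initial data contribute nothing
  -- because `φ ψ = 0`, and both sides carry the finite term `Z`.
  have key : (∫⁻ x, U t x * ψ x) + (∫⁻ r in Ioo 0 t, ∫⁻ x, U r x * G x) + Q =
      ∫⁻ r in Ioo 0 t, ∫⁻ x, U r x * H x := by
    refine (ENNReal.add_left_inj hZ_top).1 ?_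
    rw [t3, ← c2, ← t1, ← t2, add_assoc _ Q Z, ← c1]
    abel
  have hYoung : ∫⁻ r in Ioo 0 t, ∫⁻ x, U r x * H x ≤
      Q + ENNReal.ofReal (C + 1) * volume (closedBall (0 : Sp d) 2) := by
    calc ∫⁻ r in Ioo 0 t, ∫⁻ x, U r x * H x
        ≤ ∫⁻ r in Ioo 0 t, ((∫⁻ x, U r x ^ 2 * ψ x) +
            ENNReal.ofReal (C + 1) * volume (closedBall (0 : Sp d) 2)) := by
          refine lintegral_mono fun r => ?_
          rw [← setLIntegral_const, ← lintegral_indicator measurableSet_closedBall,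
            ← lintegral_add_left (hqm r hψm)]
          refine lintegral_mono fun x => ?_
          by_cases hx : x ∈ closedBall (0 : Sp d) 2
          · rw [indicator_of_mem hx]
            refine mul_le_of_sq_le (by simp; linarith) hCt ?_
            rw [hH, hψ, ← ENNReal.ofReal_mul (by linarith)]
            rcases le_total (-(lap g x / 2)) 0 with h0 | h0
            · simp [ENNReal.ofReal_of_nonpos h0]
            · simp only
              rw [← ENNReal.ofReal_pow h0]
              refine ENNReal.ofReal_le_ofReal ?_
              rw [neg_sq]
              nlinarith [hsq x, hg1 x]
          · simp [hH, hlE x hx]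
      _ = Q + ENNReal.ofReal (C + 1) * volume (closedBall (0 : Sp d) 2) * ENNReal.ofReal t := by
          rw [lintegral_add_left hQm, setLIntegral_const, Real.volume_Ioo, sub_zero]
      _ ≤ _ := by
          refine add_le_add le_rfl (mul_le_of_le_one_right' ?_)
          rw [← ENNReal.ofReal_one]
          exact ENNReal.ofReal_le_ofReal ht1
  rw [← key, add_comm, ENNReal.add_le_add_iff_left hQ_top] at hYoung
  calc ∫⁻ x in (closedBall 0 2)ᶜ, U t x = ∫⁻ x in (closedBall 0 2)ᶜ, U t x * ψ x := by
        refine setLIntegral_congr_fun measurableSet_closedBall.compl fun x hx => ?_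
        simp [hψ, hgE x hx]
    _ ≤ ∫⁻ x, U t x * ψ x := setLIntegral_le_lintegral _ _
    _ ≤ _ := le_self_add.trans hYoung

end

/-! ### Uniform bound on the mass -/

lemma two_mul_le_sq_add_sq (a b : ℝ≥0∞) (hb : b ≠ ∞) : 2 * b * a ≤ a ^ 2 + b ^ 2 := by
  by_cases ha : a = ∞
  · simp [ha]
  lift a to NNReal using ha
  lift b to NNReal using hb
  norm_cast
  rw [← NNReal.coe_le_coe]
  push_cast
  nlinarith [sq_nonneg ((a : ℝ) - b)]

/-- If the mass at time `2^{-k}` exceeds `C₁ + 2 V 2^k`, then the dissipation `∫ u²` on the dyadic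
interval before it forces the mass at time `2^{-k-1}` to exceed the next threshold. Iterating, the
mass would be unbounded near time `0`, which it is not. -/
lemma exists_mass_bound (d : ℕ) : ∃ C₂ : ℝ≥0∞, C₂ ≠ ∞ ∧
    ∀ (φ : Sp d → ℝ≥0∞) (U : ℝ → Sp d → ℝ≥0∞), Mild d φ U → Measurable φ → ∫⁻ x, φ x ≠ ∞ →
      (∀ x, x ∉ ball (0 : Sp d) 1 → φ x = 0) → ∀ t, 1 ≤ t → ∫⁻ x, U t x ≤ C₂ := by
  obtain ⟨C₁, hC₁, hout⟩ := exists_outside_bound d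
  set V := volume (closedBall (0 : Sp d) 2) with hV
  have hVt : V ≠ ∞ := measure_closedBall_lt_top.ne
  have hV0 : V ≠ 0 := (measure_closedBall_pos volume _ two_pos).ne'
  refine ⟨C₁ + 2 * V, ENNReal.add_ne_top.2 ⟨hC₁, ENNReal.mul_ne_top (by simp) hVt⟩, ?_⟩
  intro φ U h hφ hφi hφB t ht
  refine (h.mass_anti hφ hφi one_pos ht).trans ?_
  by_contra hcon
  rw [not_le] at hcon
  have step : ∀ k : ℕ, C₁ + 2 * V * 2 ^ k ≤ ∫⁻ x, U ((1 / 2 : ℝ) ^ k) x := by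
    intro k
    induction k with
    | zero => simpa using hcon.le
    | succ k ih =>
      set a : ℝ≥0∞ := 2 ^ k with ha
      have ha0 : a ≠ 0 := by simp [ha]
      have hat : a ≠ ∞ := by simp [ha]
      have hs : (0 : ℝ) < (1 / 2) ^ (k + 1) := by positivity
      have hst : ((1 : ℝ) / 2) ^ (k + 1) ≤ (1 / 2) ^ k :=
        pow_le_pow_of_le_one (by norm_num) (by norm_num) k.le_succ
      have hq : ∀ r ∈ Ico ((1 / 2 : ℝ) ^ (k + 1)) ((1 / 2) ^ k),
          4 * a ^ 2 * V ≤ ∫⁻ x, U r x ^ 2 := by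
        intro r hr
        have hr0 := hs.trans_le hr.1
        have hUm : Measurable fun x => U r x := h.meas measurable_const measurable_id
        have h1 : C₁ + 2 * V * a ≤ ∫⁻ x, U r x := ih.trans (h.mass_anti hφ hφi hr0 hr.2.le)
        have h2 : 2 * V * a ≤ ∫⁻ x in closedBall 0 2, U r x := by
          rw [← lintegral_add_compl _ (measurableSet_closedBall (x := (0 : Sp d)) (ε := 2)),
            add_comm C₁] at h1
          exact (ENNReal.add_le_add_iff_right hC₁).1 (h1.trans (add_le_add le_rfl
            (hout φ U h hφ hφi hφB r hr0
              (hr.2.le.trans (pow_le_one₀ (by norm_num) (by norm_num))))))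
        -- `U² ≥ 2 b U - b²` with `b = 2^{k+1}`, in place of the Cauchy–Schwarz inequality.
        have h3 : 2 * (2 * a) * (∫⁻ x in closedBall 0 2, U r x) ≤
            (∫⁻ x, U r x ^ 2) + (2 * a) ^ 2 * V := by
          rw [← lintegral_const_mul _ hUm, ← setLIntegral_const]
          refine le_trans ?_ (add_le_add (setLIntegral_le_lintegral (closedBall 0 2) _) le_rfl)
          rw [← lintegral_add_left (hUm.pow_const 2)]
          exact lintegral_mono fun x =>
            two_mul_le_sq_add_sq _ _ (ENNReal.mul_ne_top (by simp) hat)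
        have h4 : 4 * a ^ 2 * V + (2 * a) ^ 2 * V ≤ (∫⁻ x, U r x ^ 2) + (2 * a) ^ 2 * V := by
          refine le_trans ?_ h3
          calc 4 * a ^ 2 * V + (2 * a) ^ 2 * V = 2 * (2 * a) * (2 * V * a) := by ring
            _ ≤ _ := by gcongr
        refine (ENNReal.add_le_add_iff_right ?_).1 h4
        exact ENNReal.mul_ne_top (ENNReal.pow_ne_top (ENNReal.mul_ne_top (by simp) hat)) hVt
      rw [← h.mass_between hφ hφi hs hst]
      have hvol : volume (Ico ((1 / 2 : ℝ) ^ (k + 1)) ((1 / 2) ^ k)) = (2 * a)⁻¹ := by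
        rw [Real.volume_Ico, show ((1 : ℝ) / 2) ^ k - (1 / 2) ^ (k + 1) = (2 ^ (k + 1))⁻¹ by
          rw [one_div, inv_pow, inv_pow, pow_succ]; field_simp; norm_num,
          ENNReal.ofReal_inv_of_pos (by positivity), ENNReal.ofReal_pow (by norm_num), pow_succ,
          mul_comm]
        simp [ha]
      have h5 : 4 * a ^ 2 * V * (2 * a)⁻¹ ≤
          ∫⁻ q in Ico ((1 / 2 : ℝ) ^ (k + 1)) ((1 / 2) ^ k), ∫⁻ x, U q x ^ 2 := by
        rw [← hvol, ← setLIntegral_const]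
        exact setLIntegral_mono' measurableSet_Ico hq
      calc C₁ + 2 * V * 2 ^ (k + 1) = C₁ + 2 * V * a + 2 * V * a * ((2 * a) * (2 * a)⁻¹) := by
            rw [ENNReal.mul_inv_cancel (mul_ne_zero two_ne_zero ha0)
              (ENNReal.mul_ne_top (by simp) hat), pow_succ]
            ring
        _ = C₁ + 2 * V * a + 4 * a ^ 2 * V * (2 * a)⁻¹ := by ring
        _ ≤ _ := add_le_add ih h5
  obtain ⟨k, hk⟩ := ENNReal.exists_nat_mul_gt (a := 2 * V) (by simp [hV0]) hφi
  refine absurd ?_ (not_le.2 hk)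
  calc (k : ℝ≥0∞) * (2 * V) ≤ 2 ^ k * (2 * V) := by
        gcongr
        exact_mod_cast (Nat.lt_two_pow_self (n := k)).le
    _ ≤ C₁ + 2 * V * 2 ^ k := by rw [mul_comm]; exact le_add_self
    _ ≤ _ := step k
    _ ≤ _ := h.mass_le hφ (by positivity)

/-! ### Positivity of the limiting mass -/

section
variable {φ : Sp d → ℝ≥0∞} {U : ℝ → Sp d → ℝ≥0∞}

/-- While the integral of the sup norm stays below `1/2`, the mass at most halves. -/
lemma Mild.mass_half (h : Mild d φ U) (hφ : Measurable φ) (hφi : ∫⁻ x, φ x ≠ ∞) {s t : ℝ}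
    (hs : 0 < s) (hst : s ≤ t) {b : ℝ → ℝ≥0∞} (hb : ∀ r, s ≤ r → ∀ x, U r x ≤ b r)
    (hbi : ∫⁻ r in Ico s t, b r ≤ 2⁻¹) : ∫⁻ x, U s x ≤ 2 * ∫⁻ x, U t x := by
  set M := ∫⁻ x, U s x with hM
  have hMt : M ≠ ∞ := ne_top_of_le_ne_top hφi (h.mass_le hφ hs)
  have h1 : ∫⁻ q in Ico s t, ∫⁻ x, U q x ^ 2 ≤ 2⁻¹ * M := by
    calc ∫⁻ q in Ico s t, ∫⁻ x, U q x ^ 2 ≤ ∫⁻ q in Ico s t, b q * M := by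
          refine setLIntegral_mono' measurableSet_Ico fun q hq => ?_
          calc ∫⁻ x, U q x ^ 2 ≤ ∫⁻ x, b q * U q x := lintegral_mono fun x => by
                rw [sq]; gcongr; exact hb q hq.1 x
            _ = b q * ∫⁻ x, U q x := lintegral_const_mul _ (h.meas measurable_const measurable_id)
            _ ≤ b q * M := by gcongr; exact h.mass_anti hφ hφi hs hq.1
      _ = (∫⁻ q in Ico s t, b q) * M := lintegral_mul_const' _ _ hMt
      _ ≤ _ := by gcongr
  have h2 : M ≤ (∫⁻ x, U t x) + 2⁻¹ * M := by
    refine le_trans ?_ (add_le_add le_rfl h1)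
    rw [h.mass_between hφ hφi hs hst]
  have h3 : 2⁻¹ * M + 2⁻¹ * M = M := by
    rw [← add_mul, ENNReal.inv_two_add_inv_two, one_mul]
  have h4 : 2⁻¹ * M ≤ ∫⁻ x, U t x := by
    refine (ENNReal.add_le_add_iff_right
      (ENNReal.mul_ne_top (ENNReal.inv_ne_top.2 two_ne_zero) hMt)).1 ?_
    rwa [h3]
  calc M = 2 * (2⁻¹ * M) := by
        rw [← mul_assoc, ENNReal.mul_inv_cancel (a := 2) (by simp) (by simp), one_mul]
    _ ≤ _ := by gcongr

lemma Mild.le_one (h : Mild d φ U) (hφ1 : ∀ x, φ x ≤ 1) {t : ℝ} (ht : 0 < t) (x : Sp d) :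
    U t x ≤ 1 :=
  (h.le_P ht x).trans (P_le_const ht hφ1 x)

/-- Data bounded by `1` keep `U ≤ 1`, so each time step of length `1/2` dissipates at most half of
the mass. -/
lemma Mild.mass_pos (h : Mild d φ U) (hφ : Measurable φ) (hφi : ∫⁻ x, φ x ≠ ∞)
    (hφ0 : ∫⁻ x, φ x ≠ 0) (hφ1 : ∀ x, φ x ≤ 1) (k : ℕ) :
    ∫⁻ x, U (((k : ℝ) + 1) / 2) x ≠ 0 := by
  induction k with
  | zero =>
    intro h0
    simp only [Nat.cast_zero, zero_add] at h0
    have h1 := h.mass hφ (t := 1 / 2) (by norm_num)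
    rw [h0, zero_add] at h1
    have h2 : ∫⁻ x, φ x ≤ (∫⁻ x, φ x) * 2⁻¹ := by
      conv_lhs => rw [← h1]
      calc ∫⁻ q in Ioo (0 : ℝ) (1 / 2), ∫⁻ x, U q x ^ 2
          ≤ ∫⁻ q in Ioo (0 : ℝ) (1 / 2), ∫⁻ x, φ x := by
            refine setLIntegral_mono' measurableSet_Ioo fun q hq => ?_
            refine (lintegral_mono fun x => ?_).trans (h.mass_le hφ hq.1)
            rw [sq]
            exact mul_le_of_le_one_right' (h.le_one hφ1 hq.1 x)
        _ = _ := by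
            rw [setLIntegral_const, Real.volume_Ioo, sub_zero, one_div,
              ENNReal.ofReal_inv_of_pos two_pos]
            simp
    rw [← div_eq_mul_inv] at h2
    exact absurd h2 (not_le.2 (ENNReal.half_lt_self hφ0 hφi))
  | succ k ih =>
    intro h0
    refine ih (le_antisymm ?_ zero_le)
    have hk : (0 : ℝ) < ((k : ℝ) + 1) / 2 := by positivity
    have := h.mass_half hφ hφi (s := ((k : ℝ) + 1) / 2) (t := (((k + 1 : ℕ) : ℝ) + 1) / 2)
      (b := fun _ => 1) hk (by push_cast; linarith)
      (fun r hr x => h.le_one hφ1 (hk.trans_le hr) x) (by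
        rw [setLIntegral_const, Real.volume_Ico, one_mul,
          show (((k + 1 : ℕ) : ℝ) + 1) / 2 - ((k : ℝ) + 1) / 2 = 2⁻¹ by push_cast; ring,
          ENNReal.ofReal_inv_of_pos two_pos]
        simp)
    rwa [h0, mul_zero] at this

/-- In dimension at least three the sup norm decays like the integrable function `t^{-3/2}`. -/
lemma Mild.decay (h : Mild d φ U) (hd : 3 ≤ d) {t : ℝ} (ht : 1 ≤ t) (x : Sp d) :
    U t x ≤ ENNReal.ofReal (t ^ (-(3 / 2) : ℝ)) * ∫⁻ y, φ y := by
  have ht0 : 0 < t := one_pos.trans_le ht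
  have hd' : (3 : ℝ) ≤ d := by exact_mod_cast hd
  have hpt : t ≤ 2 * Real.pi * t := by nlinarith [Real.pi_gt_three]
  refine (h.le_P ht0 x).trans ?_
  rw [← lintegral_const_mul' _ _ ENNReal.ofReal_ne_top]
  refine lintegral_mono fun y => mul_le_mul_left (ENNReal.ofReal_le_ofReal ?_) _
  unfold heatKernel
  have h1 : Real.exp (-‖x - y‖ ^ 2 / (2 * t)) ≤ 1 := by
    rw [Real.exp_le_one_iff, neg_div]
    have : 0 ≤ ‖x - y‖ ^ 2 / (2 * t) := by positivity
    linarith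
  calc _ ≤ (2 * Real.pi * t) ^ (-(d : ℝ) / 2) :=
        mul_le_of_le_one_right (by positivity) h1
    _ ≤ t ^ (-(d : ℝ) / 2) := Real.rpow_le_rpow_of_nonpos ht0 hpt (by linarith)
    _ ≤ _ := Real.rpow_le_rpow_of_exponent_le ht (by linarith)

/-- From a time `t₀` at which the integral `2 t₀^{-1/2} ∫ φ` of the decay bound over `(t₀, ∞)` is at
most `1/2`, the mass stays above half its value at `t₀`. -/
lemma Mild.exists_lower_bound (h : Mild d φ U) (hd : 3 ≤ d) (hφ : Measurable φ)
    (hφi : ∫⁻ x, φ x ≠ ∞) (hφ0 : ∫⁻ x, φ x ≠ 0) (hφ1 : ∀ x, φ x ≤ 1) :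
    ∃ (c : ℝ≥0∞) (t₀ : ℝ), c ≠ 0 ∧ ∀ t, t₀ ≤ t → c ≤ ∫⁻ x, U t x := by
  set m := ∫⁻ x, φ x with hm
  have htend : Tendsto (fun k : ℕ => ((k : ℝ) + 1) / 2) atTop atTop :=
    (tendsto_atTop_add_const_right _ 1 tendsto_natCast_atTop_atTop).atTop_div_const two_pos
  have h1 : Tendsto (fun c : ℝ => ENNReal.ofReal (2 * c ^ (-(1 / 2) : ℝ)) * m) atTop (nhds 0) := by
    have h2 := ENNReal.tendsto_ofReal
      ((tendsto_rpow_neg_atTop (y := 1 / 2) (by norm_num)).const_mul 2)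
    have h3 := ENNReal.Tendsto.mul_const (b := m) h2 (Or.inr hφi)
    simpa using h3
  have h2 := h1.comp htend
  obtain ⟨k, hk, hk1⟩ := ((h2.eventually_le_const (u := 2⁻¹) (by simp)).and
    (htend.eventually_ge_atTop 1)).exists
  simp only [Function.comp_apply] at hk
  set c := ((k : ℝ) + 1) / 2 with hc
  have hc0 : 0 < c := one_pos.trans_le hk1
  refine ⟨2⁻¹ * ∫⁻ x, U c x, c, mul_ne_zero (by simp) (h.mass_pos hφ hφi hφ0 hφ1 k),
    fun t ht => ?_⟩
  have h3 : ∫⁻ r in Ico c t, ENNReal.ofReal (r ^ (-(3 / 2) : ℝ)) * m ≤ 2⁻¹ := by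
    refine le_trans ?_ hk
    rw [lintegral_mul_const' _ _ hφi]
    gcongr
    refine (lintegral_mono_set Ico_subset_Ici_self).trans ?_
    rw [← setLIntegral_congr Ioi_ae_eq_Ici, ← ofReal_integral_eq_lintegral_ofReal
      (integrableOn_Ioi_rpow_of_lt (by norm_num) hc0), integral_Ioi_rpow_of_lt (by norm_num) hc0]
    · refine ENNReal.ofReal_le_ofReal (le_of_eq ?_)
      norm_num
      ring
    · refine (ae_restrict_mem measurableSet_Ioi).mono fun r hr => ?_
      exact Real.rpow_nonneg (hc0.trans hr).le _
  have h4 := h.mass_half hφ hφi hc0 ht (fun r hr x => h.decay hd (hk1.trans hr) x) h3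
  calc 2⁻¹ * ∫⁻ x, U c x ≤ 2⁻¹ * (2 * ∫⁻ x, U t x) := by gcongr
    _ = _ := by rw [← mul_assoc, ENNReal.inv_mul_cancel (a := 2) (by simp) (by simp), one_mul]

end

end HeatMild

/-! ### Existence and positivity of the limit -/

open HeatMild in
/-- in `d ≥ 3`, with `u(t,x) = sup_{n≥1} u_n(t,x)` where `u_n` solves the
equation with data `n·1_{B(1)}`, the limit `κ_d := lim_{t→∞} ∫ u(t,x) dx` exists in `(0,∞)`. -/
theorem stmt_18 (d : ℕ) (hd : 3 ≤ d)
    (u : ℕ → ℝ → EuclideanSpace ℝ (Fin d) → ℝ)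
    (hu : ∀ n : ℕ, 1 ≤ n →
      IsMildSolution d
        ((Metric.ball (0 : EuclideanSpace ℝ (Fin d)) 1).indicator fun _ => (n : ℝ))
        (u n)) :
    ∃ κ : ℝ, 0 < κ ∧
      Tendsto (fun t : ℝ => ∫ x, ⨆ n : ℕ, u (n + 1) t x) atTop (nhds κ) := by
  set φ : ℕ → Sp d → ℝ≥0∞ := fun n x =>
    ENNReal.ofReal ((ball (0 : Sp d) 1).indicator (fun _ => (n : ℝ)) x) with hφ
  set U : ℕ → ℝ → Sp d → ℝ≥0∞ := fun n t x => ENNReal.ofReal (u n t x) with hU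
  have hmild : ∀ n, Mild d (φ (n + 1)) (U (n + 1)) := fun n =>
    mild_of_isMildSolution (hu (n + 1) n.succ_pos)
  have hφm : ∀ n, Measurable (φ n) := fun n =>
    (measurable_const.indicator measurableSet_ball).ennreal_ofReal
  have hφe : ∀ n, φ n = (ball (0 : Sp d) 1).indicator fun _ => (n : ℝ≥0∞) := by
    intro n; ext x
    by_cases hx : x ∈ ball (0 : Sp d) 1
    · simp [hφ, indicator_of_mem hx]
    · simp [hφ, indicator_of_notMem hx]
  have hφint : ∀ n, ∫⁻ x, φ n x = n * volume (ball (0 : Sp d) 1) := by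
    intro n
    rw [hφe, lintegral_indicator measurableSet_ball, setLIntegral_const]
  have hφi : ∀ n, ∫⁻ x, φ n x ≠ ∞ := fun n => by
    rw [hφint]
    exact ENNReal.mul_ne_top (ENNReal.natCast_ne_top n) measure_ball_lt_top.ne
  have hφB : ∀ n x, x ∉ ball (0 : Sp d) 1 → φ n x = 0 := fun n x hx => by
    rw [hφe, indicator_of_notMem hx]
  have hφle : ∀ n x, φ n x ≤ n := fun n x => by
    rw [hφe]; exact indicator_le_self' (fun _ _ => zero_le) x
  have hφmono : ∀ n x, φ n x ≤ φ (n + 1) x := fun n x => by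
    rw [hφe, hφe]
    exact indicator_le_indicator (by push_cast; exact le_self_add)
  have hUmono : ∀ t, 0 < t → ∀ x, Monotone fun n => U (n + 1) t x := fun t ht x =>
    monotone_nat_of_le_succ fun n =>
      (hmild n).comparison (hmild (n + 1)) (hφm _) (hφm _) (N := ((n + 1 + 1 : ℕ) : ℝ))
        (by positivity) (hφmono _) (fun y => (hφle _ y).trans (by rw [ENNReal.ofReal_natCast])) ht x
  have hUm : ∀ n t, Measurable (U (n + 1) t) := fun n t =>
    (hmild n).meas measurable_const measurable_id
  set W : ℝ → Sp d → ℝ≥0∞ := fun t x => ⨆ n, U (n + 1) t x with hW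
  have hWm : ∀ t, Measurable (W t) := fun t => Measurable.iSup fun n => hUm n t
  have hWint : ∀ t, 0 < t → ∫⁻ x, W t x = ⨆ n, ∫⁻ x, U (n + 1) t x := fun t ht =>
    lintegral_iSup (fun n => hUm n t) fun _ _ hnm x => hUmono t ht x hnm
  obtain ⟨C₂, hC₂, hmass⟩ := exists_mass_bound d
  have hupper : ∀ t, 1 ≤ t → ∫⁻ x, W t x ≤ C₂ := fun t ht => by
    rw [hWint t (by linarith)]
    exact iSup_le fun n => hmass _ _ (hmild n) (hφm _) (hφi _) (hφB _) t ht
  obtain ⟨c, t₀, hc, hlow⟩ := (hmild 0).exists_lower_bound hd (hφm _) (hφi _)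
    (by rw [hφint]; simpa using (measure_ball_pos volume (0 : Sp d) one_pos).ne')
    (fun x => (hφle _ x).trans (by simp))
  have hlower : ∀ t, t₀ ≤ t → c ≤ ∫⁻ x, W t x := fun t ht =>
    (hlow t ht).trans (lintegral_mono fun x => le_iSup (fun n => U (n + 1) t x) 0)
  have hanti : ∀ s t, 0 < s → s ≤ t → ∫⁻ x, W t x ≤ ∫⁻ x, W s x := fun s t hs hst => by
    rw [hWint s hs, hWint t (hs.trans_le hst)]
    exact iSup_mono fun n => (hmild n).mass_anti (hφm _) (hφi _) hs hst
  -- The mass is controlled for times at least `1`; freezing it before gives an antitone function on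
  -- the whole line.
  set J : ℝ → ℝ≥0∞ := fun t => ∫⁻ x, W (max t 1) x with hJ
  have hJanti : Antitone J := fun s t hst =>
    hanti _ _ (lt_max_of_lt_right one_pos) (max_le_max_right 1 hst)
  have hJlim := tendsto_atTop_iInf hJanti
  have hinf_le : ⨅ t, J t ≤ C₂ := (iInf_le _ 1).trans (hupper _ (le_max_right _ _))
  have hinf_top : ⨅ t, J t ≠ ∞ := ne_top_of_le_ne_top hC₂ hinf_le
  have hle_inf : c ≤ ⨅ t, J t := le_iInf fun t =>
    (hlower (max (max t 1) t₀) (le_max_right _ _)).trans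
      (hanti _ _ (lt_max_of_lt_right one_pos) (le_max_left _ _))
  have hinf0 : ⨅ t, J t ≠ 0 := fun h => hc (le_antisymm (h ▸ hle_inf) zero_le)
  refine ⟨(⨅ t, J t).toReal, ENNReal.toReal_pos hinf0 hinf_top, ?_⟩
  refine ((ENNReal.tendsto_toReal hinf_top).comp hJlim).congr' ?_
  filter_upwards [eventually_ge_atTop 1] with t ht
  simp only [Function.comp_apply, hJ, max_eq_left ht]
  have hfin : ∫⁻ x, W t x ≠ ∞ := ne_top_of_le_ne_top hC₂ (hupper t ht)
  rw [← integral_toReal (hWm t).aemeasurable (ae_lt_top (hWm t) hfin)]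
  congr 1; ext x
  rw [hW]
  simp only
  -- No boundedness is needed: an infinite supremum has `toReal` equal to `0`, the value of an
  -- unbounded real supremum.
  rw [ENNReal.toReal_iSup fun n => by simp [hU]]
  congr 1; ext n
  exact ENNReal.toReal_ofReal ((hu (n + 1) n.succ_pos).2.1 t x)
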